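/- arXiv:1604.04071 — 6 statements merged into one kernel-verified Lean document; each statement's English description precedes it below -/
import Mathlib

section
/- Let U be a connected open subset of ℂ with U ≠ ℂ. If U is holomorphically simply connected, then U is biholomorphic to the open unit disc D = {z ∈ ℂ : |z| < 1}; that is, there exists a holomorphic function from U onto D that is bijective and whose inverse is holomorphic. -/
/-- An open set `U ⊆ ℂ` is *holomorphically simply connected* if every
holomorphic function on `U` has a holomorphic antiderivative on `U`. -/
def HolSC (U : Set ℂ) : Prop :=
  ∀ f : ℂ → ℂ, DifferentiableOn ℂ f U →
    ∃ F : ℂ → ℂ, DifferentiableOn ℂ F U ∧ ∀ z ∈ U, HasDerivAt F (f z) z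

/-!
Fix `x ∈ U` and consider the univalent maps `f` of `U` into the unit disc with `f x = 0`. There is
one: a square root of `z - a`, `a ∉ U`, is univalent and omits the negatives of its values, hence a
whole disc, so an inversion carries it into the unit disc. By Montel's and Hurwitz's theorems some
such `f` has the largest possible `‖deriv f x‖`.

This `f` is onto. If it omitted a point `w` of the disc, move `w` to `0` by an automorphism of the
disc, take a square root, and move the image of `x` back to `0`. The result `k` is a competitor, and
undoing the steps gives `f = Φ ∘ k` with a holomorphic self-map `Φ` of the disc that fixes `0` and,
since it involves a squaring, is not injective. Schwarz's lemma yields `‖deriv Φ 0‖ < 1`, whence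
`‖deriv f x‖ < ‖deriv k x‖`.

Primitives enter only through square roots: a primitive of `h' / h` is, up to a locally constant
summand, a logarithm of `h`.
-/

open Filter Metric Set
open scoped ComplexConjugate Pointwise Topology

section Montel

variable {ι E F : Type*} [NormedAddCommGroup E] [NormedSpace ℂ E] [NormedAddCommGroup F]
  [NormedSpace ℂ F] {f : ι → E → F} {U : Set E}

theorem equicontinuousOn_of_differentiableOn_of_locally_bounded (hU : IsOpen U)
    (hf : ∀ i, DifferentiableOn ℂ (f i) U)
    (hb : ∀ x ∈ U, ∃ M, ∀ᶠ z in 𝓝 x, ∀ i, ‖f i z‖ ≤ M) : EquicontinuousOn f U := by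
  intro x hx
  obtain ⟨M, hM⟩ := hb x hx
  obtain ⟨r, hr, hball⟩ := Metric.mem_nhds_iff.1 (inter_mem (hU.mem_nhds hx) hM)
  have hlip : ∀ z ∈ ball x r, ∀ i, dist (f i x) (f i z) ≤ (M + M) / r * dist z x := by
    intro z hz i
    rw [dist_comm]
    refine Complex.dist_le_div_mul_dist_of_mapsTo_ball
      ((hf i).mono fun y hy ↦ (hball hy).1) (fun y hy ↦ ?_) hz
    exact (dist_le_norm_add_norm _ _).trans
      (add_le_add ((hball hy).2 i) ((hball (mem_ball_self hr)).2 i))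
  refine (Metric.equicontinuousAt_of_continuity_modulus (fun z ↦ (M + M) / r * dist z x) ?_ f
    (eventually_of_mem (ball_mem_nhds x hr) hlip)).equicontinuousWithinAt U
  simpa using ((continuous_id.dist (continuous_const (y := x))).const_mul ((M + M) / r)).tendsto x

theorem tendstoLocallyUniformlyOn_of_equicontinuousOn {X α : Type*} [TopologicalSpace X]
    [LocallyCompactSpace X] [UniformSpace α] {l : Filter ι} {f : ι → X → α} {g : X → α}
    {U : Set X} (hU : IsOpen U) (hf : EquicontinuousOn f U)
    (hlim : ∀ x ∈ U, Tendsto (f · x) l (𝓝 (g x))) : TendstoLocallyUniformlyOn f g l U := by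
  rw [tendstoLocallyUniformlyOn_iff_forall_isCompact hU]
  intro K hKU hK
  refine UniformOnFun.tendsto_iff_tendstoUniformlyOn (𝔖 := {K}) |>.1
    ((EquicontinuousOn.tendsto_uniformOnFun_iff_pi' ?_ ?_ l g).2 ?_) K rfl
  · rintro _ rfl
    exact hK
  · rintro _ rfl
    exact hf.mono hKU
  · rw [tendsto_pi_nhds]
    rintro ⟨x, hx⟩
    exact hlim x (hKU (by simpa using hx))

/-- **Montel's theorem**. Along an ultrafilter no subsequence has to be extracted. -/
theorem exists_tendstoLocallyUniformlyOn_of_locally_bounded [LocallyCompactSpace E]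
    [ProperSpace F] (l : Ultrafilter ι) (hU : IsOpen U)
    (hf : ∀ i, DifferentiableOn ℂ (f i) U)
    (hb : ∀ x ∈ U, ∃ M, ∀ᶠ z in 𝓝 x, ∀ i, ‖f i z‖ ≤ M) :
    ∃ g, TendstoLocallyUniformlyOn f g l U := by
  have hlim : ∀ x ∈ U, ∃ w, Tendsto (f · x) l (𝓝 w) := fun x hx ↦ by
    obtain ⟨M, hM⟩ := hb x hx
    have hmem : ∀ᶠ i in (l : Filter ι), f i x ∈ closedBall 0 M :=
      .of_forall fun i ↦ mem_closedBall_zero_iff.2 (hM.self_of_nhds i)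
    obtain ⟨w, -, hw⟩ := (isCompact_closedBall (0 : F) M).ultrafilter_le_nhds (l.map (f · x))
      (le_principal_iff.2 hmem)
    exact ⟨w, hw⟩
  choose! g hg using hlim
  exact ⟨g, tendstoLocallyUniformlyOn_of_equicontinuousOn hU
    (equicontinuousOn_of_differentiableOn_of_locally_bounded hU hf hb) hg⟩

end Montel

section Hurwitz

theorem exists_eq_zero_of_norm_lt_of_forall_mem_frontier {E : Type*} [NormedAddCommGroup E]
    [NormedSpace ℂ E] [Nontrivial E] {f : E → ℂ} {U : Set E} {a : E} {m : ℝ}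
    (hU : Bornology.IsBounded U) (hf : DiffContOnCl ℂ f U) (hm : ∀ z ∈ frontier U, m ≤ ‖f z‖)
    (ha : a ∈ closure U) (hfa : ‖f a‖ < m) : ∃ z ∈ closure U, f z = 0 := by
  by_contra! h0
  have hinv : ∀ z ∈ frontier U, ‖f⁻¹ z‖ ≤ m⁻¹ := fun z hz ↦ by
    rw [Pi.inv_apply, norm_inv]
    exact inv_anti₀ ((norm_nonneg _).trans_lt hfa) (hm z hz)
  have hle := Complex.norm_le_of_forall_mem_frontier_norm_le hU (hf.inv h0) hinv ha
  rw [Pi.inv_apply, norm_inv,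
    inv_le_inv₀ (norm_pos_iff.2 (h0 a ha)) ((norm_nonneg _).trans_lt hfa)] at hle
  exact hle.not_gt hfa

theorem exists_closedBall_subset_forall_sphere_le_dist {E : Type*} [NormedAddCommGroup E]
    [NormedSpace ℂ E] [CompleteSpace E] {f : ℂ → E} {a : ℂ} {V : Set ℂ} (hf : AnalyticAt ℂ f a)
    (hne : ¬ ∀ᶠ z in 𝓝 a, f z = f a) (hV : V ∈ 𝓝 a) :
    ∃ r > 0, closedBall a r ⊆ V ∧ ∃ m > 0, ∀ z ∈ sphere a r, m ≤ dist (f z) (f a) := by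
  have hne' := (hf.eventually_eq_or_eventually_ne analyticAt_const).resolve_left hne
  rw [eventually_nhdsWithin_iff] at hne'
  obtain ⟨r, hr, hsub⟩ := nhds_basis_closedBall.mem_iff.1
    (inter_mem hV (hne'.and hf.eventually_analyticAt))
  have hsphere := sphere_subset_closedBall.trans hsub
  have hcont : ContinuousOn (fun z ↦ dist (f z) (f a)) (sphere a r) := fun z hz ↦
    (hsphere hz).2.2.continuousAt.continuousWithinAt.dist continuousWithinAt_const
  obtain ⟨m, hm, hmle⟩ := (isCompact_sphere a r).exists_forall_le' hcont (a := 0) fun z hz ↦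
    dist_pos.2 ((hsphere hz).2.1 (ne_of_mem_sphere hz hr.ne'))
  exact ⟨r, hr, hsub.trans inter_subset_left, m, hm, hmle⟩

variable {ι : Type*} {l : Filter ι} {F : ι → ℂ → ℂ} {f : ℂ → ℂ} {U V : Set ℂ} {a : ℂ}

/-- **Hurwitz's theorem**. Letting the target `c n` move is what makes injectivity pass to limits:
take `c n = F n b`. -/
theorem eventually_exists_eq_of_tendstoLocallyUniformlyOn [l.NeBot] {c : ι → ℂ}
    (hF : TendstoLocallyUniformlyOn F f l U) (hU : IsOpen U)
    (hFd : ∀ᶠ n in l, DifferentiableOn ℂ (F n) U) (ha : a ∈ U) (hc : Tendsto c l (𝓝 (f a)))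
    (hne : ¬ ∀ᶠ z in 𝓝 a, f z = f a) (hV : V ∈ 𝓝 a) :
    ∀ᶠ n in l, ∃ z ∈ V, F n z = c n := by
  have hfa := (hF.differentiableOn hFd hU).analyticOnNhd hU a ha
  obtain ⟨r, hr, hrUV, m, hm, hmle⟩ :=
    exists_closedBall_subset_forall_sphere_le_dist hfa hne (inter_mem (hU.mem_nhds ha) hV)
  have hunif := Metric.tendstoUniformlyOn_iff.1 ((tendstoLocallyUniformlyOn_iff_forall_isCompact
    hU).1 hF _ (hrUV.trans inter_subset_left) (isCompact_closedBall a r)) (m / 4) (by positivity)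
  filter_upwards [hunif, hFd, Metric.tendsto_nhds.1 hc (m / 4) (by positivity)] with n hn hFn hcn
  have hclosure := closure_ball a hr.ne'
  have hdiff : DiffContOnCl ℂ (fun z ↦ F n z - c n) (ball a r) := by
    refine (DifferentiableOn.diffContOnCl ?_).sub_const _
    exact hclosure ▸ hFn.mono (hrUV.trans inter_subset_left)
  have hsphere : ∀ z ∈ frontier (ball a r), m / 2 ≤ ‖F n z - c n‖ := by
    rw [frontier_ball a hr.ne']
    intro z hz
    have hfF : dist (f z) (F n z) < m / 4 := hn z (sphere_subset_closedBall hz)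
    rw [← dist_eq_norm]
    linarith [hmle z hz, dist_triangle4 (f z) (F n z) (c n) (f a)]
  have hcenter : ‖F n a - c n‖ < m / 2 := by
    have hfF : dist (f a) (F n a) < m / 4 := hn a (mem_closedBall_self hr.le)
    rw [← dist_eq_norm]
    linarith [dist_triangle_left (F n a) (c n) (f a), dist_comm (f a) (c n)]
  obtain ⟨z, hz, hz0⟩ := exists_eq_zero_of_norm_lt_of_forall_mem_frontier isBounded_ball hdiff
    hsphere (subset_closure (mem_ball_self hr)) hcenter
  exact ⟨z, (hrUV (hclosure ▸ hz)).2, sub_eq_zero.1 hz0⟩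

end Hurwitz

/-- `IsUnivalentOn f U` says that `f` is univalent (schlicht) on `U`: injective and holomorphic.
`deriv f z` is `0` wherever `f` is not differentiable, so the field `deriv_ne_zero` also encodes
differentiability. That an injective holomorphic function has no critical points is classical;
carrying this fact along spares its proof. -/
structure IsUnivalentOn (f : ℂ → ℂ) (U : Set ℂ) : Prop where
  injOn : InjOn f U
  deriv_ne_zero : ∀ z ∈ U, deriv f z ≠ 0

theorem isUnivalentOn_div_sub {r : ℂ} (hr : r ≠ 0) (c : ℂ) :
    IsUnivalentOn (fun z ↦ r / (z - c)) {c}ᶜ where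
  injOn _ _ _ _ h := by simpa [div_eq_mul_inv, hr] using h
  deriv_ne_zero z hz := by
    have hz0 : z - c ≠ 0 := sub_ne_zero.2 hz
    rw [((hasDerivAt_const z r).fun_div ((hasDerivAt_id' z).sub_const c) hz0).deriv]
    simp [hr, hz0]

namespace IsUnivalentOn

variable {f g : ℂ → ℂ} {U V : Set ℂ}

theorem differentiableAt (hf : IsUnivalentOn f U) {z : ℂ} (hz : z ∈ U) : DifferentiableAt ℂ f z :=
  differentiableAt_of_deriv_ne_zero (hf.deriv_ne_zero z hz)

theorem differentiableOn (hf : IsUnivalentOn f U) : DifferentiableOn ℂ f U :=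
  fun _ hz ↦ (hf.differentiableAt hz).differentiableWithinAt

theorem hasStrictDerivAt (hf : IsUnivalentOn f U) (hU : IsOpen U) {z : ℂ} (hz : z ∈ U) :
    HasStrictDerivAt f (deriv f z) z :=
  (hf.differentiableOn.analyticOnNhd hU z hz).hasStrictDerivAt

theorem congr (hf : IsUnivalentOn f U) (hU : IsOpen U) (h : EqOn f g U) : IsUnivalentOn g U :=
  ⟨hf.injOn.congr h, fun z hz ↦ h.deriv hU hz ▸ hf.deriv_ne_zero z hz⟩

theorem comp (hg : IsUnivalentOn g V) (hf : IsUnivalentOn f U) (h : MapsTo f U V) :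
    IsUnivalentOn (g ∘ f) U where
  injOn := hg.injOn.comp hf.injOn h
  deriv_ne_zero z hz := by
    rw [deriv_comp z (hg.differentiableAt (h hz)) (hf.differentiableAt hz)]
    exact mul_ne_zero (hg.deriv_ne_zero _ (h hz)) (hf.deriv_ne_zero z hz)

theorem of_comp (h : IsUnivalentOn (g ∘ f) U) (hf : ∀ z ∈ U, DifferentiableAt ℂ f z)
    (hg : ∀ z ∈ U, DifferentiableAt ℂ g (f z)) : IsUnivalentOn f U where
  injOn := InjOn.of_comp h.injOn
  deriv_ne_zero z hz := by
    have := h.deriv_ne_zero z hz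
    rw [deriv_comp z (hg z hz) (hf z hz)] at this
    exact right_ne_zero_of_mul this

theorem isOpen_image (hf : IsUnivalentOn f U) (hU : IsOpen U) : IsOpen (f '' U) := by
  rw [isOpen_iff_mem_nhds]
  rintro _ ⟨z, hz, rfl⟩
  rw [← (hf.hasStrictDerivAt hU hz).map_nhds_eq (hf.deriv_ne_zero z hz)]
  exact image_mem_map (hU.mem_nhds hz)

theorem differentiableOn_invFunOn (hf : IsUnivalentOn f U) (hU : IsOpen U) :
    DifferentiableOn ℂ (Function.invFunOn f U) (f '' U) := by
  rintro _ ⟨z, hz, rfl⟩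
  have hleft : ∀ᶠ y in 𝓝 z, Function.invFunOn f U (f y) = y :=
    eventually_of_mem (hU.mem_nhds hz) hf.injOn.leftInvOn_invFunOn
  exact ((hf.hasStrictDerivAt hU hz).to_local_left_inverse (hf.deriv_ne_zero z hz)
    hleft).hasDerivAt.differentiableAt.differentiableWithinAt

theorem exists_mapsTo_ball_of_not_dense (hf : IsUnivalentOn f U)
    (hd : ¬ Dense (f '' U)) : ∃ g, IsUnivalentOn g U ∧ MapsTo g U (ball 0 1) := by
  obtain ⟨c, hc⟩ := not_forall.1 hd
  obtain ⟨r, hr, hball⟩ := Metric.mem_nhds_iff.1 (isClosed_closure.isOpen_compl.mem_nhds hc)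
  have hfar : ∀ z ∈ U, r ≤ ‖f z - c‖ := fun z hz ↦ by
    by_contra! hlt
    exact hball (mem_ball_iff_norm.2 hlt) (subset_closure (mem_image_of_mem f hz))
  have hmaps : MapsTo f U {c}ᶜ := fun z hz ↦
    sub_ne_zero.1 (norm_pos_iff.1 (hr.trans_le (hfar z hz)))
  have hr2 : ((r / 2 : ℝ) : ℂ) ≠ 0 := Complex.ofReal_ne_zero.2 (half_pos hr).ne'
  refine ⟨_, (isUnivalentOn_div_sub hr2 c).comp hf hmaps, fun z hz ↦ ?_⟩
  rw [mem_ball_zero_iff, Function.comp_apply, norm_div,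
    div_lt_one (hr.trans_le (hfar z hz)), Complex.norm_of_nonneg (half_pos hr).le]
  exact (half_lt_self hr).trans_le (hfar z hz)

end IsUnivalentOn

section LimitOfUnivalent

variable {ι : Type*} {l : Filter ι} [l.NeBot] {F : ι → ℂ → ℂ} {f : ℂ → ℂ} {U : Set ℂ}

theorem injOn_of_tendstoLocallyUniformlyOn (hU : IsOpen U) (hUc : IsPreconnected U)
    (hF : TendstoLocallyUniformlyOn F f l U) (hFd : ∀ᶠ n in l, DifferentiableOn ℂ (F n) U)
    (hFi : ∀ᶠ n in l, InjOn (F n) U) (hf : ∀ c, ¬ EqOn f (fun _ ↦ c) U) : InjOn f U := by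
  intro a ha b hb hab
  by_contra hne
  have hanal := (hF.differentiableOn hFd hU).analyticOnNhd hU
  have hb_ne : ¬ ∀ᶠ z in 𝓝 b, f z = f b := fun h ↦
    hf (f b) (hanal.eqOn_of_preconnected_of_eventuallyEq analyticOnNhd_const hUc hb h)
  have hV : U ∩ {a}ᶜ ∈ 𝓝 b :=
    inter_mem (hU.mem_nhds hb) (isOpen_compl_singleton.mem_nhds (Ne.symm hne))
  obtain ⟨n, ⟨z, ⟨hzU, hza⟩, hz⟩, hn⟩ :=
    ((eventually_exists_eq_of_tendstoLocallyUniformlyOn hF hU hFd hb (c := fun n ↦ F n a)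
      (hab ▸ hF.tendsto_at ha) hb_ne hV).and hFi).exists
  exact hza (hn hzU ha hz)

theorem deriv_ne_zero_of_tendstoLocallyUniformlyOn (hU : IsOpen U) (hUc : IsPreconnected U)
    (hF : TendstoLocallyUniformlyOn F f l U) (hFd : ∀ᶠ n in l, DifferentiableOn ℂ (F n) U)
    (hFn : ∀ᶠ n in l, ∀ z ∈ U, deriv (F n) z ≠ 0) (hf : ∀ c, ¬ EqOn f (fun _ ↦ c) U) :
    ∀ z ∈ U, deriv f z ≠ 0 := by
  intro a ha ha0
  have hfd := hF.differentiableOn hFd hU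
  have hne : ¬ ∀ᶠ z in 𝓝 a, deriv f z = deriv f a := fun h ↦ by
    have hf' : EqOn (deriv f) 0 U :=
      ((hfd.deriv hU).analyticOnNhd hU).eqOn_of_preconnected_of_eventuallyEq
        analyticOnNhd_const hUc ha (h.mono fun _ hz ↦ hz.trans ha0)
    obtain ⟨c, hc⟩ := hU.exists_is_const_of_deriv_eq_zero hUc hfd hf'
    exact hf c hc
  have hc : Tendsto (fun _ ↦ (0 : ℂ)) l (𝓝 (deriv f a)) := by
    rw [ha0]
    exact tendsto_const_nhds
  obtain ⟨n, ⟨z, hz, hz0⟩, hn⟩ :=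
    ((eventually_exists_eq_of_tendstoLocallyUniformlyOn (hF.deriv hFd hU) hU
      (hFd.mono fun _ h ↦ h.deriv hU) ha hc hne (hU.mem_nhds ha)).and hFn).exists
  exact hn z hz hz0

theorem IsUnivalentOn.of_tendstoLocallyUniformlyOn (hU : IsOpen U) (hUc : IsPreconnected U)
    (hF : TendstoLocallyUniformlyOn F f l U) (hFu : ∀ᶠ n in l, IsUnivalentOn (F n) U)
    (hf : ∀ c, ¬ EqOn f (fun _ ↦ c) U) : IsUnivalentOn f U :=
  have hFd := hFu.mono fun _ h ↦ h.differentiableOn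
  ⟨injOn_of_tendstoLocallyUniformlyOn hU hUc hF hFd (hFu.mono fun _ h ↦ h.injOn) hf,
    deriv_ne_zero_of_tendstoLocallyUniformlyOn hU hUc hF hFd
      (hFu.mono fun _ h ↦ h.deriv_ne_zero) hf⟩

end LimitOfUnivalent

theorem disjoint_image_neg_of_injOn_sq {α R : Type*} [Ring R] [IsAddTorsionFree R]
    {U : Set α} {s : α → R} (hs : InjOn (fun z ↦ s z ^ 2) U) (h0 : 0 ∉ s '' U) :
    Disjoint (s '' U) (-(s '' U)) := by
  rw [Set.disjoint_left]
  rintro _ ⟨z, hz, rfl⟩ ⟨w, hw, hwz⟩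
  obtain rfl : w = z := hs hw hz (by simp only [hwz, neg_sq])
  exact h0 ⟨w, hw, self_eq_neg.1 hwz⟩

namespace HolSC

variable {U : Set ℂ}

theorem exists_differentiableOn_exp_eq (hU : HolSC U) (hUo : IsOpen U) {h : ℂ → ℂ}
    (hh : DifferentiableOn ℂ h U) (h0 : ∀ z ∈ U, h z ≠ 0) :
    ∃ L : ℂ → ℂ, DifferentiableOn ℂ L U ∧ ∀ z ∈ U, Complex.exp (L z) = h z := by
  obtain ⟨F, hFd, hF⟩ := hU (fun z ↦ deriv h z / h z) ((hh.deriv hUo).div hh h0)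
  let c : ℂ → ℂ := fun z ↦ h z * Complex.exp (-F z)
  have hc0 : ∀ z ∈ U, c z ≠ 0 := fun z hz ↦ mul_ne_zero (h0 z hz) (Complex.exp_ne_zero _)
  have hcd : DifferentiableOn ℂ c U := hh.mul hFd.neg.cexp
  have hc' : EqOn (deriv c) 0 U := fun z hz ↦ by
    have hd : HasDerivAt c (deriv h z * Complex.exp (-F z) +
        h z * (Complex.exp (-F z) * -(deriv h z / h z))) z :=
      (hh.differentiableAt (hUo.mem_nhds hz)).hasDerivAt.mul (hF z hz).neg.cexp
    have := h0 z hz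
    rw [Pi.zero_apply, hd.deriv]
    field_simp
    ring
  -- `c` is locally constant, so the branch cut of `log` does no harm.
  have hlog : DifferentiableOn ℂ (fun z ↦ Complex.log (c z)) U := fun z hz ↦ by
    have hloc : (fun y ↦ Complex.log (c y)) =ᶠ[𝓝 z] fun _ ↦ Complex.log (c z) := by
      filter_upwards [(hUo.isOpen_inter_preimage_of_deriv_eq_zero hcd hc' {c z}).mem_nhds
        ⟨hz, rfl⟩] with y hy using congrArg Complex.log hy.2
    exact (hloc.differentiableAt_iff.2 (differentiableAt_const _)).differentiableWithinAt
  refine ⟨fun z ↦ F z + Complex.log (c z), hFd.add hlog, fun z hz ↦ ?_⟩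
  rw [Complex.exp_add, Complex.exp_log (hc0 z hz), mul_left_comm, ← Complex.exp_add,
    add_neg_cancel, Complex.exp_zero, mul_one]

theorem exists_differentiableOn_pow_eq (hU : HolSC U) (hUo : IsOpen U) {h : ℂ → ℂ}
    (hh : DifferentiableOn ℂ h U) (h0 : ∀ z ∈ U, h z ≠ 0) {n : ℕ} (hn : n ≠ 0) :
    ∃ s : ℂ → ℂ, DifferentiableOn ℂ s U ∧ ∀ z ∈ U, s z ^ n = h z := by
  obtain ⟨L, hLd, hL⟩ := hU.exists_differentiableOn_exp_eq hUo hh h0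
  refine ⟨fun z ↦ Complex.exp (L z / n), (hLd.div_const _).cexp, fun z hz ↦ ?_⟩
  rw [← Complex.exp_nat_mul, mul_div_cancel₀ _ (Nat.cast_ne_zero.2 hn), hL z hz]

theorem exists_isUnivalentOn_pow_eq (hU : HolSC U) (hUo : IsOpen U) {f : ℂ → ℂ}
    (hf : IsUnivalentOn f U) (h0 : 0 ∉ f '' U) {n : ℕ} (hn : n ≠ 0) :
    ∃ s : ℂ → ℂ, IsUnivalentOn s U ∧ ∀ z ∈ U, s z ^ n = f z := by
  obtain ⟨s, hsd, hs⟩ := hU.exists_differentiableOn_pow_eq hUo hf.differentiableOn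
    (fun z hz hfz ↦ h0 ⟨z, hz, hfz⟩) hn
  have hcomp : IsUnivalentOn ((· ^ n) ∘ s) U := hf.congr hUo fun z hz ↦ (hs z hz).symm
  exact ⟨s, hcomp.of_comp (fun z hz ↦ hsd.differentiableAt (hUo.mem_nhds hz))
    fun _ _ ↦ differentiableAt_pow n, hs⟩

theorem exists_isUnivalentOn_not_dense (hU : HolSC U) (hUo : IsOpen U) (hne : U ≠ univ) :
    ∃ s, IsUnivalentOn s U ∧ ¬ Dense (s '' U) := by
  obtain ⟨a, ha⟩ := (ne_univ_iff_exists_notMem U).1 hne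
  have hsub : IsUnivalentOn (· - a) U := ⟨sub_left_injective.injOn, fun z _ ↦ by simp⟩
  have hsub0 : 0 ∉ (· - a) '' U := by
    rintro ⟨z, hz, hz0⟩
    exact ha (sub_eq_zero.1 hz0 ▸ hz)
  obtain ⟨s, hsu, hs⟩ := hU.exists_isUnivalentOn_pow_eq hUo hsub hsub0 two_ne_zero
  have hdisj : Disjoint (s '' U) (-(s '' U)) := by
    refine disjoint_image_neg_of_injOn_sq (hsub.injOn.congr fun z hz ↦ (hs z hz).symm) ?_
    rintro ⟨z, hz, hz0⟩
    exact hsub0 ⟨z, hz, (hs z hz).symm.trans (by rw [hz0, zero_pow two_ne_zero])⟩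
  refine ⟨s, hsu, fun hd ↦ ?_⟩
  obtain ⟨y, hy⟩ := hd.inter_open_nonempty _ (hsu.isOpen_image hUo).neg hd.nonempty.neg
  exact hdisj.le_bot ⟨hy.2, hy.1⟩

end HolSC

/-- The Blaschke factor, which for `‖a‖ < 1` is the automorphism of the unit disc sending `a`
to `0`. -/
noncomputable def blaschkeFactor (a z : ℂ) : ℂ := (z - a) / (1 - conj a * z)

section BlaschkeFactor

variable {a z : ℂ}

@[simp]
theorem blaschkeFactor_self : blaschkeFactor a a = 0 := by simp [blaschkeFactor]

@[simp]
theorem blaschkeFactor_apply_zero : blaschkeFactor a 0 = -a := by simp [blaschkeFactor]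

theorem one_sub_conj_mul_ne_zero (ha : a ∈ ball 0 1) (hz : z ∈ ball 0 1) :
    1 - conj a * z ≠ 0 := by
  rw [mem_ball_zero_iff] at ha hz
  intro h
  have hnorm : ‖conj a * z‖ < 1 := by
    rw [norm_mul, Complex.norm_conj]
    exact mul_lt_one_of_nonneg_of_lt_one_left (norm_nonneg _) ha hz.le
  rw [← sub_eq_zero.1 h, norm_one] at hnorm
  exact hnorm.false

theorem blaschkeFactor_eq_zero_iff (ha : a ∈ ball 0 1) (hz : z ∈ ball 0 1) :
    blaschkeFactor a z = 0 ↔ z = a := by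
  rw [blaschkeFactor, div_eq_zero_iff, or_iff_left (one_sub_conj_mul_ne_zero ha hz), sub_eq_zero]

theorem normSq_one_sub_conj_mul_sub_normSq_sub (a z : ℂ) :
    Complex.normSq (1 - conj a * z) - Complex.normSq (z - a) =
      (1 - Complex.normSq a) * (1 - Complex.normSq z) := by
  simp only [Complex.normSq_apply, Complex.sub_re, Complex.sub_im, Complex.one_re, Complex.one_im,
    Complex.mul_re, Complex.mul_im, Complex.conj_re, Complex.conj_im]
  ring

theorem mapsTo_blaschkeFactor (ha : a ∈ ball 0 1) :
    MapsTo (blaschkeFactor a) (ball 0 1) (ball 0 1) := by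
  intro z hz
  have hlt : ∀ {w : ℂ}, w ∈ ball 0 1 → 0 < 1 - Complex.normSq w := fun {w} hw ↦ by
    rw [Complex.normSq_eq_norm_sq, sub_pos, sq_lt_one_iff₀ (norm_nonneg w)]
    exact mem_ball_zero_iff.1 hw
  rw [mem_ball_zero_iff, blaschkeFactor, norm_div,
    div_lt_one (norm_pos_iff.2 (one_sub_conj_mul_ne_zero ha hz)),
    ← sq_lt_sq₀ (norm_nonneg _) (norm_nonneg _), ← Complex.normSq_eq_norm_sq,
    ← Complex.normSq_eq_norm_sq, ← sub_pos, normSq_one_sub_conj_mul_sub_normSq_sub]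
  exact mul_pos (hlt ha) (hlt hz)

theorem differentiableOn_blaschkeFactor (ha : a ∈ ball 0 1) :
    DifferentiableOn ℂ (blaschkeFactor a) (ball 0 1) := by
  have hnum : Differentiable ℂ fun z : ℂ ↦ z - a := by fun_prop
  have hden : Differentiable ℂ fun z : ℂ ↦ 1 - conj a * z := by fun_prop
  exact hnum.differentiableOn.div hden.differentiableOn fun z hz ↦ one_sub_conj_mul_ne_zero ha hz

theorem leftInvOn_blaschkeFactor_neg (ha : a ∈ ball 0 1) :
    LeftInvOn (blaschkeFactor (-a)) (blaschkeFactor a) (ball 0 1) := by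
  intro z hz
  have hz0 : 1 - conj a * z ≠ 0 := one_sub_conj_mul_ne_zero ha hz
  have ha0 : 1 - conj a * a ≠ 0 := one_sub_conj_mul_ne_zero ha ha
  have hnum : (z - a) / (1 - conj a * z) + a = z * (1 - conj a * a) / (1 - conj a * z) := by
    rw [div_add' _ _ _ hz0]
    ring
  have hden : 1 + conj a * ((z - a) / (1 - conj a * z)) =
      (1 - conj a * a) / (1 - conj a * z) := by
    field_simp
    ring
  simp only [blaschkeFactor, map_neg, sub_neg_eq_add, neg_mul]
  rw [hnum, hden, div_div_div_cancel_right₀ hz0, mul_div_cancel_right₀ _ ha0]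

theorem isUnivalentOn_blaschkeFactor (ha : a ∈ ball 0 1) :
    IsUnivalentOn (blaschkeFactor a) (ball 0 1) := by
  have hdiff : ∀ {b z : ℂ}, b ∈ ball 0 1 → z ∈ ball 0 1 →
      DifferentiableAt ℂ (blaschkeFactor b) z := fun hb hz ↦
    (differentiableOn_blaschkeFactor hb).differentiableAt (isOpen_ball.mem_nhds hz)
  have hid : IsUnivalentOn id (ball 0 1) := ⟨injOn_id _, fun z _ ↦ by simp⟩
  have hcomp : IsUnivalentOn (blaschkeFactor (-a) ∘ blaschkeFactor a) (ball 0 1) :=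
    hid.congr isOpen_ball (leftInvOn_blaschkeFactor_neg ha).eqOn.symm
  exact hcomp.of_comp (fun z hz ↦ hdiff ha hz)
    fun z hz ↦ hdiff (by simpa using ha) (mapsTo_blaschkeFactor ha hz)

end BlaschkeFactor

theorem norm_deriv_lt_div_of_mapsTo_ball_of_not_injOn {E : Type*} [NormedAddCommGroup E]
    [NormedSpace ℂ E] [StrictConvexSpace ℝ E] {f : ℂ → E} {c : ℂ} {R₁ R₂ : ℝ}
    (hd : DifferentiableOn ℂ f (ball c R₁)) (h_maps : MapsTo f (ball c R₁) (closedBall (f c) R₂))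
    (hR₂ : 0 < R₂) (hf : ¬ InjOn f (ball c R₁)) : ‖deriv f c‖ < R₂ / R₁ := by
  have hR₁ : 0 < R₁ := nonempty_ball.1 <| nonempty_iff_ne_empty.2 fun h ↦
    hf (h ▸ injOn_empty f)
  refine (Complex.norm_deriv_le_div_of_mapsTo_ball hd h_maps hR₁).lt_of_ne fun heq ↦ hf ?_
  rw [← dslope_same] at heq
  have hslope : dslope f c c ≠ 0 := norm_pos_iff.1 (heq ▸ div_pos hR₂ hR₁)
  refine InjOn.congr (fun z _ w _ hzw ↦ ?_) (Complex.affine_of_mapsTo_ball_of_norm_dslope_eq_div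
    hd h_maps (mem_ball_self hR₁) heq).symm
  exact sub_left_injective (smul_left_injective ℂ hslope (add_left_cancel hzw))

theorem sq_mem_unitBall_iff {𝕜 : Type*} [NormedDivisionRing 𝕜] {a : 𝕜} :
    a ^ 2 ∈ ball 0 1 ↔ a ∈ ball 0 1 := by
  rw [mem_ball_zero_iff, mem_ball_zero_iff, norm_pow, sq_lt_one_iff₀ (norm_nonneg a)]

/-- The map through which a univalent `f` that vanishes at `x` and omits `-b ^ 2` factors: if `s`
is a branch of the square root of `blaschkeFactor (-b ^ 2) ∘ f` with `s x = b`, then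
`f = koebeSquare b ∘ blaschkeFactor b ∘ s`. -/
noncomputable def koebeSquare (b z : ℂ) : ℂ := blaschkeFactor (b ^ 2) (blaschkeFactor (-b) z ^ 2)

section KoebeSquare

variable {b : ℂ}

@[simp]
theorem koebeSquare_apply_zero : koebeSquare b 0 = 0 := by simp [koebeSquare]

theorem mapsTo_koebeSquare (hb : b ∈ ball 0 1) :
    MapsTo (koebeSquare b) (ball 0 1) (ball 0 1) := fun _ hz ↦
  mapsTo_blaschkeFactor (sq_mem_unitBall_iff.2 hb)
    (sq_mem_unitBall_iff.2 (mapsTo_blaschkeFactor (by simpa using hb) hz))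

theorem differentiableOn_koebeSquare (hb : b ∈ ball 0 1) :
    DifferentiableOn ℂ (koebeSquare b) (ball 0 1) := by
  have hb' : -b ∈ ball 0 1 := by simpa using hb
  exact (differentiableOn_blaschkeFactor (sq_mem_unitBall_iff.2 hb)).comp
    ((differentiableOn_blaschkeFactor hb').pow 2)
    fun z hz ↦ sq_mem_unitBall_iff.2 (mapsTo_blaschkeFactor hb' hz)

theorem not_injOn_koebeSquare (hb : b ∈ ball 0 1) (hb0 : b ≠ 0) :
    ¬ InjOn (koebeSquare b) (ball 0 1) := by
  have hb' : -b ∈ ball 0 1 := by simpa using hb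
  have heq : koebeSquare b (blaschkeFactor b (-b)) = koebeSquare b 0 := by
    simp [koebeSquare, leftInvOn_blaschkeFactor_neg hb hb']
  intro hinj
  have hzero := hinj (mapsTo_blaschkeFactor hb hb') (mem_ball_self one_pos) heq
  exact hb0 (neg_eq_self.1 ((blaschkeFactor_eq_zero_iff hb hb').1 hzero))

theorem norm_deriv_koebeSquare_lt_one (hb : b ∈ ball 0 1) (hb0 : b ≠ 0) :
    ‖deriv (koebeSquare b) 0‖ < 1 := by
  have hmaps : MapsTo (koebeSquare b) (ball 0 1) (closedBall (koebeSquare b 0) 1) := by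
    rw [koebeSquare_apply_zero]
    exact (mapsTo_koebeSquare hb).mono_right ball_subset_closedBall
  simpa using norm_deriv_lt_div_of_mapsTo_ball_of_not_injOn (differentiableOn_koebeSquare hb)
    hmaps one_pos (not_injOn_koebeSquare hb hb0)

end KoebeSquare

/-- The univalent maps of `U` into the unit disc that send `x` to `0`: the competitors in Koebe's
extremal problem, which asks for the largest `‖deriv f x‖`. -/
def koebeFamily (U : Set ℂ) (x : ℂ) : Set (ℂ → ℂ) :=
  {f | IsUnivalentOn f U ∧ MapsTo f U (ball 0 1) ∧ f x = 0}

section KoebeFamily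

variable {f : ℂ → ℂ} {U : Set ℂ} {x : ℂ}

theorem IsUnivalentOn.blaschkeFactor_comp_mem_koebeFamily (hf : IsUnivalentOn f U)
    (hmaps : MapsTo f U (ball 0 1)) (hx : x ∈ U) :
    blaschkeFactor (f x) ∘ f ∈ koebeFamily U x :=
  ⟨(isUnivalentOn_blaschkeFactor (hmaps hx)).comp hf hmaps,
    (mapsTo_blaschkeFactor (hmaps hx)).comp hmaps, blaschkeFactor_self⟩

theorem exists_eqOn_koebeSquare_comp (hU : HolSC U) (hUo : IsOpen U) (hx : x ∈ U)
    (hf : f ∈ koebeFamily U x) {w : ℂ} (hw : w ∈ ball 0 1) (hwf : w ∉ f '' U) :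
    ∃ b ∈ ball (0 : ℂ) 1, b ≠ 0 ∧ ∃ k ∈ koebeFamily U x, EqOn f (koebeSquare b ∘ k) U := by
  obtain ⟨hfu, hmaps, hfx⟩ := hf
  have hh0 : 0 ∉ (blaschkeFactor w ∘ f) '' U := by
    rintro ⟨z, hz, hz0⟩
    exact hwf ⟨z, hz, (blaschkeFactor_eq_zero_iff hw (hmaps hz)).1 hz0⟩
  obtain ⟨s, hsu, hs⟩ := hU.exists_isUnivalentOn_pow_eq hUo
    ((isUnivalentOn_blaschkeFactor hw).comp hfu hmaps) hh0 two_ne_zero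
  simp only [Function.comp_apply] at hs
  have hsmaps : MapsTo s U (ball 0 1) := fun z hz ↦
    sq_mem_unitBall_iff.1 (hs z hz ▸ mapsTo_blaschkeFactor hw (hmaps hz))
  have hsx : s x ^ 2 = -w := by rw [hs x hx, hfx, blaschkeFactor_apply_zero]
  have hsx0 : s x ≠ 0 := fun h0 ↦
    hh0 ⟨x, hx, (hs x hx).symm.trans (by rw [h0, zero_pow two_ne_zero])⟩
  refine ⟨s x, hsmaps hx, hsx0, _, hsu.blaschkeFactor_comp_mem_koebeFamily hsmaps hx,
    fun z hz ↦ ?_⟩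
  simp only [koebeSquare, Function.comp_apply, hsx,
    leftInvOn_blaschkeFactor_neg (hsmaps hx) (hsmaps hz), hs z hz,
    leftInvOn_blaschkeFactor_neg hw (hmaps hz)]

theorem exists_mem_koebeFamily_norm_deriv_lt (hU : HolSC U) (hUo : IsOpen U) (hx : x ∈ U)
    (hf : f ∈ koebeFamily U x) {w : ℂ} (hw : w ∈ ball 0 1) (hwf : w ∉ f '' U) :
    ∃ k ∈ koebeFamily U x, ‖deriv f x‖ < ‖deriv k x‖ := by
  obtain ⟨b, hb, hb0, k, hk, hfk⟩ := exists_eqOn_koebeSquare_comp hU hUo hx hf hw hwf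
  refine ⟨k, hk, ?_⟩
  have hd : DifferentiableAt ℂ (koebeSquare b) (k x) :=
    (differentiableOn_koebeSquare hb).differentiableAt (isOpen_ball.mem_nhds (hk.2.1 hx))
  calc ‖deriv f x‖ = ‖deriv (koebeSquare b) 0‖ * ‖deriv k x‖ := by
        rw [hfk.deriv hUo hx, deriv_comp x hd (hk.1.differentiableAt hx), hk.2.2, norm_mul]
    _ < ‖deriv k x‖ := mul_lt_of_lt_one_left (norm_pos_iff.2 (hk.1.deriv_ne_zero x hx))
        (norm_deriv_koebeSquare_lt_one hb hb0)

theorem HolSC.nonempty_koebeFamily (hU : HolSC U) (hUo : IsOpen U) (hne : U ≠ univ)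
    (hx : x ∈ U) : (koebeFamily U x).Nonempty := by
  obtain ⟨s, hsu, hsd⟩ := hU.exists_isUnivalentOn_not_dense hUo hne
  obtain ⟨g, hgu, hg⟩ := hsu.exists_mapsTo_ball_of_not_dense hsd
  exact ⟨_, hgu.blaschkeFactor_comp_mem_koebeFamily hg hx⟩

theorem bddAbove_norm_deriv_koebeFamily (hU : U ∈ 𝓝 x) :
    BddAbove ((fun f ↦ ‖deriv f x‖) '' koebeFamily U x) := by
  obtain ⟨r, hr, hrU⟩ := Metric.mem_nhds_iff.1 hU
  refine ⟨1 / r, forall_mem_image.2 fun f ⟨hfu, hmaps, hfx⟩ ↦ ?_⟩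
  refine Complex.norm_deriv_le_div_of_mapsTo_ball (hfu.differentiableOn.mono hrU) ?_ hr
  rw [hfx]
  exact hmaps.mono hrU ball_subset_closedBall

theorem mem_koebeFamily_of_tendstoLocallyUniformlyOn {ι : Type*} {l : Filter ι} [l.NeBot]
    {F : ι → ℂ → ℂ} (hUo : IsOpen U) (hUc : IsPreconnected U) (hx : x ∈ U)
    (hF : TendstoLocallyUniformlyOn F f l U) (hFU : ∀ᶠ n in l, F n ∈ koebeFamily U x)
    (hfx : deriv f x ≠ 0) : f ∈ koebeFamily U x := by
  have hfu : IsUnivalentOn f U := by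
    refine .of_tendstoLocallyUniformlyOn hUo hUc hF (hFU.mono fun _ h ↦ h.1) fun c hc ↦ hfx ?_
    rw [hc.deriv hUo hx, deriv_const]
  have hclosed : f '' U ⊆ closedBall 0 1 := by
    rintro _ ⟨z, hz, rfl⟩
    exact isClosed_closedBall.mem_of_tendsto (hF.tendsto_at hz)
      (hFU.mono fun n h ↦ ball_subset_closedBall (h.2.1 hz))
  have hmaps : f '' U ⊆ ball 0 1 := by
    rw [← interior_closedBall 0 one_ne_zero]
    exact interior_maximal hclosed (hfu.isOpen_image hUo)
  refine ⟨hfu, mapsTo_iff_image_subset.2 hmaps, tendsto_nhds_unique (hF.tendsto_at hx) ?_⟩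
  exact tendsto_const_nhds.congr' (hFU.mono fun n h ↦ h.2.2.symm)

theorem exists_isMaxOn_norm_deriv_koebeFamily (hUo : IsOpen U) (hUc : IsPreconnected U)
    (hx : x ∈ U) (hne : (koebeFamily U x).Nonempty) :
    ∃ g ∈ koebeFamily U x, IsMaxOn (fun f ↦ ‖deriv f x‖) (koebeFamily U x) g := by
  have hbdd := bddAbove_norm_deriv_koebeFamily (hUo.mem_nhds hx)
  obtain ⟨u, -, hu, huS⟩ := exists_seq_tendsto_sSup (hne.image fun f ↦ ‖deriv f x‖) hbdd
  choose F hF hFu using huS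
  have hFd : ∀ n, DifferentiableOn ℂ (F n) U := fun n ↦ (hF n).1.differentiableOn
  have hFb : ∀ z ∈ U, ∃ M, ∀ᶠ y in 𝓝 z, ∀ n, ‖F n y‖ ≤ M := fun z hz ↦
    ⟨1, eventually_of_mem (hUo.mem_nhds hz) fun y hy n ↦
      (mem_ball_zero_iff.1 ((hF n).2.1 hy)).le⟩
  obtain ⟨g, hg⟩ :=
    exists_tendstoLocallyUniformlyOn_of_locally_bounded (hyperfilter ℕ) hUo hFd hFb
  have hlim : ‖deriv g x‖ = sSup ((fun f ↦ ‖deriv f x‖) '' koebeFamily U x) := by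
    refine tendsto_nhds_unique ((hg.deriv (.of_forall hFd) hUo).tendsto_at hx).norm ?_
    simpa only [Function.comp_apply, hFu] using hu.mono_left Nat.hyperfilter_le_atTop
  have hmax : IsMaxOn (fun f ↦ ‖deriv f x‖) (koebeFamily U x) g := fun f hf ↦
    (le_csSup hbdd (mem_image_of_mem _ hf)).trans_eq hlim.symm
  have hgx : deriv g x ≠ 0 := by
    obtain ⟨f, hf⟩ := hne
    exact norm_pos_iff.1 ((norm_pos_iff.2 (hf.1.deriv_ne_zero x hx)).trans_le (hmax hf))
  exact ⟨g, mem_koebeFamily_of_tendstoLocallyUniformlyOn hUo hUc hx hg (.of_forall hF) hgx, hmax⟩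

end KoebeFamily

theorem HolSC.exists_isUnivalentOn_bijOn_ball {U : Set ℂ} (hU : HolSC U) (hUo : IsOpen U)
    (hUc : IsConnected U) (hne : U ≠ univ) :
    ∃ g, IsUnivalentOn g U ∧ BijOn g U (ball 0 1) := by
  obtain ⟨x, hx⟩ := hUc.nonempty
  obtain ⟨g, hg, hmax⟩ := exists_isMaxOn_norm_deriv_koebeFamily hUo hUc.isPreconnected hx
    (hU.nonempty_koebeFamily hUo hne hx)
  refine ⟨g, hg.1, hg.2.1, hg.1.injOn, fun w hw ↦ ?_⟩
  by_contra hwg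
  obtain ⟨k, hk, hlt⟩ := exists_mem_koebeFamily_norm_deriv_lt hU hUo hx hg hw hwg
  exact (hmax hk).not_gt hlt

/-- **The Riemann Mapping Theorem (Riemann's form).**
A connected open proper subset of `ℂ` that is holomorphically simply connected
is biholomorphic to the open unit disc. -/
theorem riemann_mapping_holSC (U : Set ℂ) (hUopen : IsOpen U) (hUconn : IsConnected U)
    (hUne : U ≠ Set.univ) (hU : HolSC U) :
    ∃ H G : ℂ → ℂ,
      DifferentiableOn ℂ H U ∧
      DifferentiableOn ℂ G (Metric.ball (0 : ℂ) 1) ∧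
      Set.MapsTo H U (Metric.ball (0 : ℂ) 1) ∧
      Set.MapsTo G (Metric.ball (0 : ℂ) 1) U ∧
      (∀ z ∈ U, G (H z) = z) ∧
      (∀ w ∈ Metric.ball (0 : ℂ) 1, H (G w) = w) := by
  obtain ⟨g, hgu, hg⟩ := hU.exists_isUnivalentOn_bijOn_ball hUopen hUconn hUne
  have hinv := hg.invOn_invFunOn
  refine ⟨g, Function.invFunOn g U, hgu.differentiableOn, ?_, hg.mapsTo,
    hg.surjOn.mapsTo_invFunOn, hinv.1, hinv.2⟩
  rw [← hg.image_eq]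
  exact hgu.differentiableOn_invFunOn hUopen
end

section
/- Let U be a connected open subset of ℂ with U ≠ ℂ. If U is holomorphically simply connected, then there exists a bounded open set V ⊆ ℂ and a holomorphic bijection from U onto V with holomorphic inverse; i.e., U is biholomorphic to a bounded open subset of ℂ. -/
/-!
If `a ∉ U`, then `z - a` has a holomorphic logarithm `g` on `U`. As `exp ∘ g` is injective, so is
`g`, and the open set `g '' U` is disjoint from its translate by `2πi`. It is therefore not dense,
and `z ↦ (g z - b)⁻¹` is bounded and injective on `U` for any `b` outside its closure. The map
`w ↦ exp (w⁻¹ + b) + a` is a holomorphic inverse.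
-/

open Set

theorem isOpen_image_of_differentiableOn_of_injOn {U : Set ℂ} {f : ℂ → ℂ} (hU : IsOpen U)
    (hf : DifferentiableOn ℂ f U) (hinj : InjOn f U) : IsOpen (f '' U) := by
  rw [isOpen_iff_mem_nhds]
  rintro _ ⟨z, hz, rfl⟩
  have hUz : U ∈ nhds z := hU.mem_nhds hz
  have not_eventually_const : ¬ ∀ᶠ w in nhds z, f w = f z := by
    intro hconst
    obtain ⟨w, ⟨hw, hwU⟩, hne⟩ := ((hconst.and hUz).filter_mono nhdsWithin_le_nhds |>.and
      (self_mem_nhdsWithin (s := {z}ᶜ))).exists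
    exact hne (hinj hwU hz hw)
  exact (hf.analyticAt hUz).eventually_constant_or_nhds_le_map_nhds.resolve_left
    not_eventually_const (Filter.image_mem_map hUz)

theorem not_dense_of_injOn_of_periodic {G α : Type*} [AddGroup G] [TopologicalSpace G]
    [ContinuousAdd G] {f : G → α} {c : G} (hf : Function.Periodic f c) (hc : c ≠ 0)
    {V : Set G} (hV : IsOpen V) (hinj : InjOn f V) : ¬ Dense V := by
  intro hdense
  obtain ⟨v₀, hv₀⟩ := hdense.nonempty
  obtain ⟨v, hvc, hv⟩ : (((· + c) ⁻¹' V) ∩ V).Nonempty :=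
    hdense.inter_open_nonempty _ (hV.preimage (continuous_add_const c)) ⟨v₀ - c, by simpa⟩
  exact hc (add_eq_left.mp (hinj hvc hv (hf v)))

theorem exists_notMem_closure_image_of_injOn_exp_comp {U : Set ℂ} (hU : IsOpen U) {g : ℂ → ℂ}
    (hg : DifferentiableOn ℂ g U) (hinj : InjOn (Complex.exp ∘ g) U) :
    ∃ b, b ∉ closure (g '' U) :=
  have hopen : IsOpen (g '' U) := isOpen_image_of_differentiableOn_of_injOn hU hg hinj.of_comp
  not_forall.mp <| not_dense_of_injOn_of_periodic Complex.exp_periodic Complex.two_pi_I_ne_zero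
    hopen hinj.image_of_comp

theorem isBounded_image_inv_sub_of_notMem_closure {K : Type*} [NormedDivisionRing K] {V : Set K}
    {b : K} (hb : b ∉ closure V) : Bornology.IsBounded ((fun w => (w - b)⁻¹) '' V) := by
  obtain ⟨r, hr, hfar⟩ : ∃ r > 0, ∀ w ∈ V, r ≤ dist b w := by
    simpa only [Metric.mem_closure_iff, not_forall, not_exists, not_and, not_lt, exists_prop]
      using hb
  refine isBounded_iff_forall_norm_le.mpr ⟨r⁻¹, forall_mem_image.mpr fun w hw => ?_⟩
  rw [norm_inv, ← dist_eq_norm']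
  exact inv_anti₀ hr (hfar w hw)

theorem differentiableOn_comp_of_deriv_eq_zero {𝕜 E F : Type*} [RCLike 𝕜]
    [NormedAddCommGroup E] [NormedSpace 𝕜 E] [NormedAddCommGroup F] [NormedSpace 𝕜 F]
    {f : 𝕜 → E} {s : Set 𝕜} (hs : IsOpen s) (hf : DifferentiableOn 𝕜 f s)
    (hf' : EqOn (deriv f) 0 s) (g : E → F) : DifferentiableOn 𝕜 (g ∘ f) s := by
  intro z hz
  have hconst : g ∘ f =ᶠ[nhds z] fun _ => g (f z) := by
    have hlevel := hs.isOpen_inter_preimage_of_deriv_eq_zero hf hf' {f z}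
    filter_upwards [hlevel.mem_nhds ⟨hz, rfl⟩] with w hw using congrArg g hw.2
  exact ((differentiableAt_const _).congr_of_eventuallyEq hconst).differentiableWithinAt

theorem hasDerivAt_mul_exp_neg_of_logDeriv {f g : ℂ → ℂ} {z : ℂ} (hf : DifferentiableAt ℂ f z)
    (hg : HasDerivAt g (logDeriv f z) z) (hfz : f z ≠ 0) :
    HasDerivAt (fun w => f w * Complex.exp (-g w)) 0 z := by
  refine (hf.hasDerivAt.mul hg.neg.cexp).congr_deriv ?_
  rw [logDeriv_apply]
  field_simp
  ring

theorem HolSC.exists_log {U : Set ℂ} (hU : HolSC U) (hUopen : IsOpen U) {f : ℂ → ℂ}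
    (hf : DifferentiableOn ℂ f U) (hf₀ : ∀ z ∈ U, f z ≠ 0) :
    ∃ g : ℂ → ℂ, DifferentiableOn ℂ g U ∧ ∀ z ∈ U, Complex.exp (g z) = f z := by
  obtain ⟨G, hG, hG'⟩ := hU (logDeriv f) ((hf.deriv hUopen).div hf hf₀)
  let h : ℂ → ℂ := fun z => f z * Complex.exp (-G z)
  have hh' : ∀ z ∈ U, HasDerivAt h 0 z := fun z hz =>
    hasDerivAt_mul_exp_neg_of_logDeriv (hf.differentiableAt (hUopen.mem_nhds hz)) (hG' z hz)
      (hf₀ z hz)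
  -- `h` is locally constant, so `log ∘ h` is holomorphic even where `h` meets the branch cut.
  have hlog : DifferentiableOn ℂ (Complex.log ∘ h) U :=
    differentiableOn_comp_of_deriv_eq_zero hUopen
      (fun z hz => (hh' z hz).differentiableAt.differentiableWithinAt)
      (fun z hz => (hh' z hz).deriv) Complex.log
  refine ⟨fun z => G z + Complex.log (h z), hG.add hlog, fun z hz => ?_⟩
  have hhz : h z ≠ 0 := mul_ne_zero (hf₀ z hz) (Complex.exp_ne_zero _)
  rw [Complex.exp_add, Complex.exp_log hhz, mul_left_comm, ← Complex.exp_add, add_neg_cancel,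
    Complex.exp_zero, mul_one]

theorem holSC_biholomorphic_to_bounded_general (U : Set ℂ) (hUopen : IsOpen U)
    (hUne : U ≠ Set.univ) (hU : HolSC U) :
    ∃ V : Set ℂ, IsOpen V ∧ Bornology.IsBounded V ∧
      ∃ φ ψ : ℂ → ℂ,
        DifferentiableOn ℂ φ U ∧
        DifferentiableOn ℂ ψ V ∧
        Set.MapsTo φ U V ∧
        Set.MapsTo ψ V U ∧
        (∀ z ∈ U, ψ (φ z) = z) ∧
        (∀ w ∈ V, φ (ψ w) = w) := by
  obtain ⟨a, ha⟩ := (ne_univ_iff_exists_notMem U).mp hUne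
  obtain ⟨g, hg, hexp⟩ := hU.exists_log hUopen (differentiableOn_id.sub_const a)
    fun z hz => sub_ne_zero.mpr (ne_of_mem_of_not_mem hz ha)
  have hexp_inj : InjOn (Complex.exp ∘ g) U :=
    (sub_left_injective (b := a)).injOn.congr fun z hz => (hexp z hz).symm
  obtain ⟨b, hb⟩ := exists_notMem_closure_image_of_injOn_exp_comp hUopen hg hexp_inj
  have hgb : ∀ z ∈ U, g z - b ≠ 0 := fun z hz =>
    sub_ne_zero.mpr (ne_of_mem_of_not_mem (subset_closure (mem_image_of_mem g hz)) hb)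
  let φ : ℂ → ℂ := fun z => (g z - b)⁻¹
  let ψ : ℂ → ℂ := fun w => Complex.exp (w⁻¹ + b) + a
  have hφ : DifferentiableOn ℂ φ U := (hg.sub_const b).inv hgb
  have hψ : DifferentiableOn ℂ ψ (φ '' U) := by
    have hne : ∀ w ∈ φ '' U, w ≠ 0 := forall_mem_image.mpr fun z hz => inv_ne_zero (hgb z hz)
    exact ((differentiableOn_id.inv hne).add_const b).cexp.add_const a
  have hleft : LeftInvOn ψ φ U := fun z hz => by simp [φ, ψ, hexp z hz]
  have hbounded : Bornology.IsBounded (φ '' U) :=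
    image_image (fun w => (w - b)⁻¹) g U ▸ isBounded_image_inv_sub_of_notMem_closure hb
  exact ⟨φ '' U, isOpen_image_of_differentiableOn_of_injOn hUopen hφ hleft.injOn, hbounded,
    φ, ψ, hφ, hψ, mapsTo_image φ U, hleft.mapsTo (surjOn_image φ U), hleft,
    hleft.rightInvOn_image⟩

/-- A connected open proper subset of `ℂ` that is holomorphically simply connected
is biholomorphic to a bounded open subset of `ℂ`. -/
theorem holSC_biholomorphic_to_bounded (U : Set ℂ) (hUopen : IsOpen U)
    (hUconn : IsConnected U) (hUne : U ≠ Set.univ) (hU : HolSC U) :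
    ∃ V : Set ℂ, IsOpen V ∧ Bornology.IsBounded V ∧
      ∃ φ ψ : ℂ → ℂ,
        DifferentiableOn ℂ φ U ∧
        DifferentiableOn ℂ ψ V ∧
        Set.MapsTo φ U V ∧
        Set.MapsTo ψ V U ∧
        (∀ z ∈ U, ψ (φ z) = z) ∧
        (∀ w ∈ V, φ (ψ w) = w) :=
  holSC_biholomorphic_to_bounded_general U hUopen hUne hU
end

section
/- Let U be a connected open subset of ℂ that is holomorphically simply connected, and let f be a holomorphic function on U with f(z) ≠ 0 for all z ∈ U. Then there exists a holomorphic function L on U such that exp(L(z)) = f(z) for all z ∈ U. -/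
/-!
A primitive `F` of `f' / f` solves the problem locally up to a constant: `f * exp (-F)` has zero
derivative, hence is locally constant. As it does not vanish, its pointwise principal logarithm is
again locally constant, whatever branch cut `Complex.log` has, and adding it to `F` gives a
logarithm of `f`.
-/

open scoped Topology

section LocallyConstant

variable {𝕜 G : Type*} [RCLike 𝕜] [NormedAddCommGroup G] [NormedSpace 𝕜 G]

theorem eventuallyEq_const_of_hasDerivAt_zero {U : Set 𝕜} {g : 𝕜 → G} {z : 𝕜} (hU : IsOpen U)
    (hg : ∀ w ∈ U, HasDerivAt g 0 w) (hz : z ∈ U) : g =ᶠ[𝓝 z] fun _ ↦ g z := by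
  have hopen : IsOpen (U ∩ g ⁻¹' {g z}) :=
    hU.isOpen_inter_preimage_of_deriv_eq_zero
      (fun w hw ↦ (hg w hw).differentiableAt.differentiableWithinAt) (fun w hw ↦ (hg w hw).deriv) _
  filter_upwards [hopen.mem_nhds ⟨hz, rfl⟩] with w hw using hw.2

theorem hasDerivAt_zero_comp_of_hasDerivAt_zero {X : Type*} [NormedAddCommGroup X]
    [NormedSpace 𝕜 X] {U : Set 𝕜} {g : 𝕜 → G} {z : 𝕜} (φ : G → X) (hU : IsOpen U)
    (hg : ∀ w ∈ U, HasDerivAt g 0 w) (hz : z ∈ U) : HasDerivAt (fun w ↦ φ (g w)) 0 z :=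
  (hasDerivAt_const z (φ (g z))).congr_of_eventuallyEq
    ((eventuallyEq_const_of_hasDerivAt_zero hU hg hz).fun_comp φ)

end LocallyConstant

theorem hasDerivAt_mul_cexp_neg_of_hasDerivAt_logDeriv {𝕜 : Type*} [NontriviallyNormedField 𝕜]
    [NormedAlgebra 𝕜 ℂ] {f F : 𝕜 → ℂ} {z : 𝕜} (hf : DifferentiableAt 𝕜 f z)
    (hfz : f z ≠ 0) (hF : HasDerivAt F (logDeriv f z) z) :
    HasDerivAt (fun w ↦ f w * Complex.exp (-F w)) 0 z := by
  refine (hf.hasDerivAt.mul hF.neg.cexp).congr_deriv ?_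
  rw [logDeriv_apply]
  field_simp
  ring

theorem exists_hasDerivAt_logDeriv_and_cexp_eq {𝕜 : Type*} [RCLike 𝕜] [NormedAlgebra 𝕜 ℂ]
    {f F : 𝕜 → ℂ} {U : Set 𝕜} (hU : IsOpen U) (hf : DifferentiableOn 𝕜 f U) (hf₀ : ∀ z ∈ U, f z ≠ 0)
    (hF : ∀ z ∈ U, HasDerivAt F (logDeriv f z) z) :
    ∃ L : 𝕜 → ℂ, ∀ z ∈ U, HasDerivAt L (logDeriv f z) z ∧ Complex.exp (L z) = f z := by
  let g : 𝕜 → ℂ := fun w ↦ f w * Complex.exp (-F w)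
  have hg : ∀ z ∈ U, HasDerivAt g 0 z := fun z hz ↦
    hasDerivAt_mul_cexp_neg_of_hasDerivAt_logDeriv (hf.differentiableAt (hU.mem_nhds hz))
      (hf₀ z hz) (hF z hz)
  refine ⟨fun z ↦ F z + Complex.log (g z), fun z hz ↦ ⟨?_, ?_⟩⟩
  · simpa only [add_zero] using
      (hF z hz).fun_add (hasDerivAt_zero_comp_of_hasDerivAt_zero Complex.log hU hg hz)
  · have hgz : g z ≠ 0 := mul_ne_zero (hf₀ z hz) (Complex.exp_ne_zero _)
    calc Complex.exp (F z + Complex.log (g z))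
        = Complex.exp (F z) * (f z * Complex.exp (-F z)) := by
          rw [Complex.exp_add, Complex.exp_log hgz]
      _ = f z := by
          rw [mul_left_comm, ← Complex.exp_add, add_neg_cancel, Complex.exp_zero, mul_one]

theorem holSC_exists_log_general (U : Set ℂ) (hUopen : IsOpen U) (hU : HolSC U) (f : ℂ → ℂ)
    (hf : DifferentiableOn ℂ f U) (hfne : ∀ z ∈ U, f z ≠ 0) :
    ∃ L : ℂ → ℂ, DifferentiableOn ℂ L U ∧ ∀ z ∈ U, Complex.exp (L z) = f z := by
  obtain ⟨F, -, hF⟩ := hU (logDeriv f) ((hf.deriv hUopen).div hf hfne)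
  obtain ⟨L, hL⟩ := exists_hasDerivAt_logDeriv_and_cexp_eq hUopen hf hfne hF
  exact ⟨L, fun z hz ↦ (hL z hz).1.differentiableAt.differentiableWithinAt, fun z hz ↦ (hL z hz).2⟩

/-- On a holomorphically simply connected connected open set, every nonvanishing
holomorphic function has a holomorphic logarithm. -/
theorem holSC_exists_log (U : Set ℂ) (hUopen : IsOpen U) (hUconn : IsConnected U)
    (hU : HolSC U) (f : ℂ → ℂ) (hf : DifferentiableOn ℂ f U)
    (hfne : ∀ z ∈ U, f z ≠ 0) :
    ∃ L : ℂ → ℂ, DifferentiableOn ℂ L U ∧ ∀ z ∈ U, Complex.exp (L z) = f z :=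
  holSC_exists_log_general U hUopen hU f hf hfne
end

section
/- Let U be a connected open subset of ℂ that is simply connected as a topological space. Then U is holomorphically simply connected: for every holomorphic function f on U there exists a holomorphic function F on U with F'(z) = f(z) for all z ∈ U. -/
/-!
Primitives exist on discs, and two primitives of the same function differ by a locally constant
function. Hence the germs of primitives form a covering space of `U`: over a disc with primitive
`P`, its sheets are the functions `v + P` with `v` constant. As `U` is simply connected, the
identity of `U` lifts to this covering, and a lift is a global primitive.
-/

open Filter Metric Set Topology

theorem exists_continuous_section_of_isCoveringMap {E X : Type*} [TopologicalSpace E]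
    [TopologicalSpace X] [SimplyConnectedSpace X] [LocallyPathConnectedSpace X] [Nonempty E]
    {p : E → X} (hp : IsCoveringMap p) : ∃ s : C(X, E), Function.RightInverse s p := by
  obtain ⟨e⟩ := ‹Nonempty E›
  obtain ⟨s, ⟨-, hs⟩, -⟩ := hp.existsUnique_continuousMap_lifts (.id X) (p e) e rfl
  exact ⟨s, congrFun hs⟩

section Gluing

variable {X ι A : Type*} [TopologicalSpace X] [AddGroup A] {V : ι → Set X} {P : ι → X → A}

/-- The bundle of germs of functions that differ from each `P i` by a locally constant function
on `V i`. The fibre coordinate of the germ of `F` at `x` over `V i` is `F x - P i x`, and the fibre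
`A` carries the discrete topology. -/
@[reducible]
def germBundleCore [TopologicalSpace A] [DiscreteTopology A] (hV : ∀ i, IsOpen (V i))
    (index : X → ι) (hindex : ∀ x, x ∈ V (index x))
    (hP : ∀ i j, ∀ x ∈ V i ∩ V j, ∀ᶠ y in 𝓝 x, P i y - P j y = P i x - P j x) :
    FiberBundleCore ι X A where
  baseSet := V
  isOpen_baseSet := hV
  indexAt := index
  mem_baseSet_at := hindex
  coordChange i j x v := v + (P i x - P j x)
  coordChange_self i x _ v := by rw [sub_self, add_zero]
  continuousOn_coordChange i j := by
    rintro ⟨x, v⟩ ⟨hx, -⟩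
    have hcont : ContinuousAt (fun y ↦ P i y - P j y) x :=
      continuousAt_const.congr (EventuallyEq.symm (hP i j x hx))
    exact (continuousAt_snd.add (ContinuousAt.fst' hcont)).continuousWithinAt
  coordChange_comp i j k x _ v := by rw [add_assoc, sub_add_sub_cancel]

theorem exists_glue_of_eventually_sub_eq [SimplyConnectedSpace X] [LocallyPathConnectedSpace X]
    (hV : ∀ i, IsOpen (V i)) (hcover : ∀ x, ∃ i, x ∈ V i)
    (hP : ∀ i j, ∀ x ∈ V i ∩ V j, ∀ᶠ y in 𝓝 x, P i y - P j y = P i x - P j x) :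
    ∃ F : X → A, ∀ i, ∀ x ∈ V i, ∀ᶠ y in 𝓝 x, F y - P i y = F x - P i x := by
  let _ : TopologicalSpace A := ⊥
  have : DiscreteTopology A := ⟨rfl⟩
  choose index hindex using hcover
  let Z := germBundleCore hV index hindex hP
  have hcov : IsCoveringMap (Bundle.TotalSpace.proj : Z.TotalSpace → X) :=
    FiberBundle.isCoveringMap (F := A) (E := Z.Fiber)
  have : Nonempty Z.TotalSpace := (inferInstance : Nonempty X).map fun x ↦ ⟨x, (0 : A)⟩
  obtain ⟨s, hs⟩ := exists_continuous_section_of_isCoveringMap hcov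
  let v (x : X) : A := (s x).snd
  refine ⟨fun x ↦ v x + P (index x) x, fun i x hx ↦ ?_⟩
  have hcoord (y : X) : (Z.localTriv i (s y)).2 = v y + P (index y) y - P i y := by
    rw [FiberBundleCore.localTriv_apply, hs y, add_sub_assoc]
  have hmem : s x ∈ (Z.localTriv i).source := by
    rw [Z.mem_localTriv_source, hs x]
    exact hx
  have hcont : ContinuousAt (fun y ↦ (Z.localTriv i (s y)).2) x :=
    (((Z.localTriv i).continuousAt hmem).comp s.continuous.continuousAt).snd
  simpa only [ContinuousAt, nhds_discrete, tendsto_pure, hcoord] using hcont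

end Gluing

section Primitive

variable {𝕜 E G : Type*} [RCLike 𝕜] [NormedAddCommGroup E] [NormedSpace 𝕜 E]
  [NormedAddCommGroup G] [NormedSpace 𝕜 G] {ω : E → E →L[𝕜] G} {U : Set E}

theorem eventually_sub_eq_of_hasFDerivAt {P Q : E → G} {x : E}
    (hP : ∀ᶠ y in 𝓝 x, HasFDerivAt P (ω y) y) (hQ : ∀ᶠ y in 𝓝 x, HasFDerivAt Q (ω y) y) :
    ∀ᶠ y in 𝓝 x, P y - Q y = P x - Q x := by
  let _ : NormedSpace ℝ E := .restrictScalars ℝ 𝕜 E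
  obtain ⟨r, hr, hball⟩ := eventually_nhds_iff_ball.1 (hP.and hQ)
  have hderiv : ∀ y ∈ ball x r, HasFDerivAt (P - Q) (0 : E →L[𝕜] G) y := fun y hy ↦ by
    simpa only [sub_self] using (hball y hy).1.sub (hball y hy).2
  filter_upwards [ball_mem_nhds x hr] with y hy
  exact isOpen_ball.is_const_of_fderiv_eq_zero (convex_ball x r).isPreconnected
    (fun z hz ↦ (hderiv z hz).differentiableAt.differentiableWithinAt)
    (fun z hz ↦ (hderiv z hz).fderiv) hy (mem_ball_self hr)

theorem exists_forall_hasFDerivAt_of_isSimplyConnected (hUo : IsOpen U) (hU : IsSimplyConnected U)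
    (hω : ∀ x ∈ U, ∃ P : E → G, ∀ᶠ y in 𝓝 x, HasFDerivAt P (ω y) y) :
    ∃ F : E → G, ∀ x ∈ U, HasFDerivAt F (ω x) x := by
  let _ : NormedSpace ℝ E := .restrictScalars ℝ 𝕜 E
  have := hUo.locallyPathConnectedSpace
  have := hU.simplyConnectedSpace
  choose! P hP using hω
  let V (i : U) : Set U := {x | ∀ᶠ y in 𝓝 (x : E), HasFDerivAt (P i) (ω y) y}
  have hVo (i : U) : IsOpen (V i) :=
    isOpen_setOfPred_eventually_nhds.preimage continuous_subtype_val
  obtain ⟨F, hF⟩ := exists_glue_of_eventually_sub_eq (P := fun i x : U ↦ P i x) hVo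
    (fun x ↦ ⟨x, hP x x.2⟩) fun i j x hx ↦
      continuous_subtype_val.continuousAt.eventually (eventually_sub_eq_of_hasFDerivAt hx.1 hx.2)
  refine ⟨Function.extend Subtype.val F 0, fun x hx ↦ ?_⟩
  lift x to U using hx
  refine ((hP x x.2).self_of_nhds.const_add (F x - P x x)).congr_of_eventuallyEq ?_
  rw [EventuallyEq, ← hUo.isOpenEmbedding_subtypeVal.map_nhds_eq, eventually_map]
  filter_upwards [hF x x (hP x x.2)] with y hy
  rw [Subtype.val_injective.extend_apply, ← hy, sub_add_cancel]

end Primitive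

theorem simplyConnected_implies_holSC_general {E : Type*} [NormedAddCommGroup E] [NormedSpace ℂ E]
    [CompleteSpace E] {U : Set ℂ} {f : ℂ → E} (hUo : IsOpen U) (hU : IsSimplyConnected U)
    (hf : DifferentiableOn ℂ f U) : Complex.IsExactOn f U := by
  refine exists_forall_hasFDerivAt_of_isSimplyConnected hUo hU fun x hx ↦ ?_
  obtain ⟨r, hr, hball⟩ := Metric.isOpen_iff.1 hUo x hx
  obtain ⟨P, hP⟩ := (hf.mono hball).isExactOn_ball
  exact ⟨P, eventually_of_mem (ball_mem_nhds x hr) hP⟩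

/-- A topologically simply connected connected open subset of `ℂ` is
holomorphically simply connected. -/
theorem simplyConnected_implies_holSC (U : Set ℂ) (hUopen : IsOpen U)
    (hUconn : IsConnected U) (hU : SimplyConnectedSpace U) : HolSC U := by
  intro f hf
  obtain ⟨F, hF⟩ := simplyConnected_implies_holSC_general hUopen hU hf
  exact ⟨F, fun z hz ↦ (hF z hz).differentiableAt.differentiableWithinAt, hF⟩
end

section
/- Let U be a bounded connected open subset of ℂ that is holomorphically simply connected, and let b : ∂U → ℝ be continuous. Then there exists a harmonic function h : U → ℝ such that the function on the closure of U which equals h on U and equals b on ∂U is continuous; i.e., the Dirichlet problem on U with boundary values b is solvable. -/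
open scoped Classical

/-- A real-valued function is *harmonic* on a set if near each point of the set
it is the real part of a holomorphic function. -/
def HarmonicOnSet (g : ℂ → ℝ) (U : Set ℂ) : Prop :=
  ∀ z ∈ U, ∃ V : Set ℂ, IsOpen V ∧ z ∈ V ∧ V ⊆ U ∧
    ∃ F : ℂ → ℂ, DifferentiableOn ℂ F V ∧ ∀ w ∈ V, (F w).re = g w

/-!
Perron's method produces a harmonic function as the upper envelope of the subharmonic functions with
boundary values at most `b`; only its boundary behavior depends on `U`. At a boundary point `ζ`,
holomorphic simple connectedness gives a branch `L` of `log (z - ζ)` on `U`, whose real part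
`log |z - ζ|` is negative near `ζ` and tends to `-∞` there. Hence `-Re (1 / L)` is positive and
harmonic near `ζ` and tends to `0` at `ζ`, but it may have infimum `0` away from `ζ`.

Bouligand's remedy: on a small disc around `ζ`, add to `n` times this function the Poisson integral
of the boundary data needed to reach `1` on the part of the circle inside `U`. Truncated at `1` and
extended by `1`, the sum is superharmonic on all of `U`. The data tends to `0` boundedly as
`n → ∞`, so the value of the Poisson integral at the center `ζ` becomes arbitrarily small. These
functions squeeze the Perron envelope between bounds that are close to `b ζ` near `ζ`.
-/

open Metric Filter Topology Real InnerProductSpace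

section Subharmonic

/-- A real function on a subset `U` of the plane is *subharmonic* if at each point of `U` it is at
most its averages over all sufficiently small circles around the point. Continuity, instead of the
usual semicontinuity, is built in: it is preserved by Poisson modification, hence suffices for
Perron's method. -/
structure SubharmonicOn (v : ℂ → ℝ) (U : Set ℂ) : Prop where
  continuousOn : ContinuousOn v U
  le_circleAverage : ∀ z ∈ U, ∀ᶠ r in 𝓝[>] (0 : ℝ), v z ≤ circleAverage v z r

lemma eventually_closedBall_abs_subset {z : ℂ} {U : Set ℂ} (hU : U ∈ 𝓝 z) :
    ∀ᶠ r in 𝓝[>] (0 : ℝ), closedBall z |r| ⊆ U :=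
  ((continuous_abs.tendsto' 0 0 abs_zero).mono_left nhdsWithin_le_nhds).eventually
    (eventually_closedBall_subset hU)

lemma eventually_sphere_abs_subset {z : ℂ} {U : Set ℂ} (hU : U ∈ 𝓝 z) :
    ∀ᶠ r in 𝓝[>] (0 : ℝ), sphere z |r| ⊆ U :=
  (eventually_closedBall_abs_subset hU).mono fun _ hr ↦ sphere_subset_closedBall.trans hr

namespace SubharmonicOn

variable {U V W : Set ℂ} {u v : ℂ → ℝ}

lemma mono (hv : SubharmonicOn v V) (h : U ⊆ V) : SubharmonicOn v U :=
  ⟨hv.continuousOn.mono h, fun z hz ↦ hv.le_circleAverage z (h hz)⟩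

lemma of_harmonicOnNhd (hU : IsOpen U) (hv : HarmonicOnNhd v U) : SubharmonicOn v U := by
  refine ⟨hv.continuousOn, fun z hz ↦ ?_⟩
  filter_upwards [eventually_closedBall_abs_subset (hU.mem_nhds hz)] with r hr
  exact ((hv.mono hr).circleAverage_eq).ge

lemma const (a : ℝ) : SubharmonicOn (fun _ ↦ a) U :=
  ⟨continuousOn_const, fun z _ ↦ .of_forall fun r ↦ (circleAverage_const a z r).ge⟩

lemma const_mul {a : ℝ} (ha : 0 ≤ a) (hv : SubharmonicOn v U) :
    SubharmonicOn (fun z ↦ a * v z) U := by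
  refine ⟨continuousOn_const.mul hv.continuousOn, fun z hz ↦ ?_⟩
  filter_upwards [hv.le_circleAverage z hz] with r hr
  calc a * v z ≤ a * circleAverage v z r := by gcongr
    _ = circleAverage (fun w ↦ a * v w) z r := (circleAverage_fun_smul (a := a)).symm

lemma add (hU : IsOpen U) (hu : SubharmonicOn u U) (hv : SubharmonicOn v U) :
    SubharmonicOn (fun z ↦ u z + v z) U := by
  refine ⟨hu.continuousOn.add hv.continuousOn, fun z hz ↦ ?_⟩
  filter_upwards [hu.le_circleAverage z hz, hv.le_circleAverage z hz,
    eventually_sphere_abs_subset (hU.mem_nhds hz)] with r hur hvr hrU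
  rw [circleAverage_fun_add (hu.continuousOn.mono hrU).circleIntegrable'
    (hv.continuousOn.mono hrU).circleIntegrable']
  exact add_le_add hur hvr

lemma sup (hU : IsOpen U) (hu : SubharmonicOn u U) (hv : SubharmonicOn v U) :
    SubharmonicOn (fun z ↦ max (u z) (v z)) U := by
  have hmax := hu.continuousOn.sup hv.continuousOn
  refine ⟨hmax, fun z hz ↦ ?_⟩
  filter_upwards [hu.le_circleAverage z hz, hv.le_circleAverage z hz,
    eventually_sphere_abs_subset (hU.mem_nhds hz)] with r hur hvr hrU
  have hmaxr := (hmax.mono hrU).circleIntegrable'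
  exact max_le
    (hur.trans <| circleAverage_mono (hu.continuousOn.mono hrU).circleIntegrable' hmaxr
      fun w _ ↦ le_max_left _ _)
    (hvr.trans <| circleAverage_mono (hv.continuousOn.mono hrU).circleIntegrable' hmaxr
      fun w _ ↦ le_max_right _ _)

theorem piecewise (hU : IsOpen U) (hW : IsOpen W) (hu : SubharmonicOn u (U ∩ W))
    (hv : SubharmonicOn v U) (hle : ∀ z ∈ U ∩ W, v z ≤ u z)
    (hfr : ∀ z ∈ U ∩ frontier W, Tendsto u (𝓝[U ∩ W] z) (𝓝 (v z))) :
    SubharmonicOn (W.piecewise u v) U := by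
  have hcont : ContinuousOn (W.piecewise u v) U := by
    refine ContinuousOn.piecewise' (fun z hz ↦ ?_) (fun z hz ↦ ?_) hu.continuousOn
      (hv.continuousOn.mono Set.inter_subset_left)
    · rw [Set.piecewise_eq_of_notMem _ _ _ (hW.frontier_eq ▸ hz.2).2]
      exact hfr z hz
    · rw [Set.piecewise_eq_of_notMem _ _ _ (hW.frontier_eq ▸ hz.2).2]
      exact (hv.continuousOn z hz.1).mono_left (nhdsWithin_mono z Set.inter_subset_left)
  refine ⟨hcont, fun z hz ↦ ?_⟩
  by_cases hzW : z ∈ W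
  · filter_upwards [hu.le_circleAverage z ⟨hz, hzW⟩,
      eventually_sphere_abs_subset (hW.mem_nhds hzW)] with r hr hrW
    rwa [Set.piecewise_eq_of_mem _ _ _ hzW,
      circleAverage_congr_sphere fun w hw ↦ Set.piecewise_eq_of_mem W u v (hrW hw)]
  · filter_upwards [hv.le_circleAverage z hz,
      eventually_sphere_abs_subset (hU.mem_nhds hz)] with r hr hrU
    rw [Set.piecewise_eq_of_notMem _ _ _ hzW]
    refine hr.trans <| circleAverage_mono (hv.continuousOn.mono hrU).circleIntegrable'
      (hcont.mono hrU).circleIntegrable' fun w hw ↦ ?_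
    by_cases hwW : w ∈ W
    · simpa only [Set.piecewise_eq_of_mem _ _ _ hwW] using hle w ⟨hrU hw, hwW⟩
    · rw [Set.piecewise_eq_of_notMem _ _ _ hwW]

end SubharmonicOn

end Subharmonic

section MaximumPrinciple

lemma exists_isMaxOn_of_eventually_frontier_lt {X : Type*} [TopologicalSpace X] {U : Set X}
    {f : X → ℝ} (hU : IsCompact (closure U)) (hf : ContinuousOn f U) {z : X} (hz : z ∈ U)
    (hfr : ∀ ξ ∈ frontier U, ∀ᶠ x in 𝓝[U] ξ, f x < f z) : ∃ x ∈ U, IsMaxOn f U x := by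
  set K : Set X := {x ∈ U | f z ≤ f x}
  have hKU : K ⊆ U := Set.sep_subset _ _
  have hK : IsClosed K := by
    refine isClosed_of_closure_subset fun x hx ↦ ?_
    have := mem_closure_iff_nhdsWithin_neBot.1 hx
    have hge : ∀ᶠ y in 𝓝[K] x, f z ≤ f y := eventually_nhdsWithin_of_forall fun y hy ↦ hy.2
    by_cases hxU : x ∈ U
    · exact ⟨hxU, ge_of_tendsto ((hf x hxU).mono_left (nhdsWithin_mono x hKU)) hge⟩
    · have hxfr : x ∈ frontier U := ⟨closure_mono hKU hx, fun h ↦ hxU (interior_subset h)⟩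
      obtain ⟨y, hlt, hle⟩ :=
        (((hfr x hxfr).filter_mono (nhdsWithin_mono x hKU)).and hge).exists
      exact absurd hle hlt.not_ge
  obtain ⟨x, hx, hmax⟩ := (hU.of_isClosed_subset hK (hKU.trans subset_closure)).exists_isMaxOn
    ⟨z, hz, le_rfl⟩ (hf.mono hKU)
  refine ⟨x, hx.1, fun y hy ↦ ?_⟩
  rcases le_total (f z) (f y) with h | h
  · exact hmax ⟨hy, h⟩
  · exact h.trans hx.2

lemma circleAverage_norm_sub_sq (a c : ℂ) (r : ℝ) :
    circleAverage (fun z ↦ ‖z - a‖ ^ 2) c r = ‖c - a‖ ^ 2 + r ^ 2 := by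
  set g : ℂ → ℝ := fun z ↦
    (((‖c - a‖ ^ 2 + r ^ 2 : ℝ) : ℂ) + 2 * (z - c) * (starRingEnd ℂ) (c - a)).re with hg
  have hgh : HarmonicOnNhd g (closedBall c |r|) := fun z _ ↦
    AnalyticAt.harmonicAt_re (by fun_prop)
  have hsphere : Set.EqOn (fun z ↦ ‖z - a‖ ^ 2) g (sphere c |r|) := fun z hz ↦ by
    have hr : ‖z - c‖ ^ 2 = r ^ 2 := by rw [mem_sphere_iff_norm.1 hz, sq_abs]
    simp only [hg, Complex.add_re, Complex.ofReal_re, ← hr, ← Complex.normSq_eq_norm_sq,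
      Complex.normSq_apply]
    simp
    ring
  rw [circleAverage_congr_sphere hsphere, hgh.circleAverage_eq]
  simp only [hg, sub_self, mul_zero, zero_mul, add_zero, Complex.ofReal_re]

theorem SubharmonicOn.le_of_frontier {U : Set ℂ} {v : ℂ → ℝ} {M : ℝ} (hv : SubharmonicOn v U)
    (hU : IsOpen U) (hUb : Bornology.IsBounded U)
    (hfr : ∀ ξ ∈ frontier U, ∀ a > M, ∀ᶠ z in 𝓝[U] ξ, v z < a) {z : ℂ} (hz : z ∈ U) :
    v z ≤ M := by
  by_contra! hMz
  obtain ⟨B, hB, hUB⟩ := hUb.subset_ball_lt 0 z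
  have hUB' : ∀ x ∈ U, ‖x - z‖ ^ 2 ≤ B ^ 2 := fun x hx ↦ by
    gcongr
    exact (mem_ball_iff_norm.1 (hUB hx)).le
  set δ := (v z - M) / (2 * B ^ 2) with hδ
  have hδpos : 0 < δ := div_pos (sub_pos.2 hMz) (by positivity)
  have hδB : δ * B ^ 2 = (v z - M) / 2 := by rw [hδ]; field_simp
  have hquad : Continuous fun x : ℂ ↦ δ * ‖x - z‖ ^ 2 := by fun_prop
  -- adding a small paraboloid makes the sub-mean value inequality strict
  set f : ℂ → ℝ := fun x ↦ v x + δ * ‖x - z‖ ^ 2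
  have hf : ContinuousOn f U := hv.continuousOn.add hquad.continuousOn
  obtain ⟨x, hxU, hmax⟩ : ∃ x ∈ U, IsMaxOn f U x := by
    refine exists_isMaxOn_of_eventually_frontier_lt hUb.isCompact_closure hf hz fun ξ hξ ↦ ?_
    filter_upwards [hfr ξ hξ ((v z + M) / 2) (by linarith), self_mem_nhdsWithin] with x hx hxU
    have hfz : f z = v z := by simp [f]
    have hδx : δ * ‖x - z‖ ^ 2 ≤ δ * B ^ 2 := mul_le_mul_of_nonneg_left (hUB' x hxU) hδpos.le
    rw [hfz]
    exact (add_lt_add_of_lt_of_le hx hδx).trans_eq (by rw [hδB]; ring)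
  obtain ⟨r, hrv, hrU, hr⟩ := ((hv.le_circleAverage x hxU).and
    ((eventually_sphere_abs_subset (hU.mem_nhds hxU)).and self_mem_nhdsWithin)).exists
  have hlt : f x < circleAverage f x r := calc
    f x < v x + δ * (‖x - z‖ ^ 2 + r ^ 2) := by
      have : 0 < δ * r ^ 2 := mul_pos hδpos (pow_pos hr 2)
      simp only [f]
      linarith
    _ ≤ circleAverage v x r + circleAverage (fun y ↦ δ * ‖y - z‖ ^ 2) x r := by
      rw [← circleAverage_norm_sub_sq, ← smul_eq_mul, ← circleAverage_fun_smul]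
      simpa only [smul_eq_mul, add_le_add_iff_right] using hrv
    _ = circleAverage f x r := (circleAverage_fun_add
      (hv.continuousOn.mono hrU).circleIntegrable' hquad.continuousOn.circleIntegrable').symm
  exact hlt.not_ge <| circleAverage_mono_on_of_le_circle (hf.mono hrU).circleIntegrable'
    fun y hy ↦ hmax (hrU hy)

end MaximumPrinciple

section PoissonIntegral

/-- The Poisson integral of `f` over the circle of center `c` and radius `R`. It is meaningful at
points of `ball c R` only. -/
noncomputable def poissonIntegral (c : ℂ) (R : ℝ) (f : ℂ → ℝ) (w : ℂ) : ℝ :=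
  circleAverage (fun z ↦ poissonKernel c w z * f z) c R

variable {c w : ℂ} {R : ℝ} {f g : ℂ → ℝ}

lemma continuousOn_poissonKernel_sphere (hw : w ∈ ball c R) :
    ContinuousOn (poissonKernel c w) (sphere c |R|) := by
  rw [poissonKernel_eq_re_herglotzRieszKernel]
  exact Complex.continuous_re.comp_continuousOn (continuousOn_herglotzRieszKernel_sphere hw)

lemma poissonKernel_eq_of_mem_sphere {z : ℂ} (hz : z ∈ sphere c R) :
    poissonKernel c w z = (R ^ 2 - ‖w - c‖ ^ 2) / ‖z - w‖ ^ 2 := by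
  rw [poissonKernel_def, mem_sphere_iff_norm.1 hz, sub_sub_sub_cancel_right]

lemma sq_sub_norm_sub_sq_nonneg (hw : w ∈ ball c R) : 0 ≤ R ^ 2 - ‖w - c‖ ^ 2 :=
  sub_nonneg.2 (pow_le_pow_left₀ (norm_nonneg _) (mem_ball_iff_norm.1 hw).le 2)

lemma poissonKernel_nonneg (hw : w ∈ ball c R) {z : ℂ} (hz : z ∈ sphere c R) :
    0 ≤ poissonKernel c w z := by
  rw [poissonKernel_eq_of_mem_sphere hz]
  exact div_nonneg (sq_sub_norm_sub_sq_nonneg hw) (by positivity)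

lemma circleIntegrable_poissonKernel_mul (hw : w ∈ ball c R) (hf : CircleIntegrable f c R) :
    CircleIntegrable (fun z ↦ poissonKernel c w z * f z) c R :=
  hf.continuousOn_mul (continuousOn_poissonKernel_sphere hw)

lemma poissonIntegral_mono (hw : w ∈ ball c R) (hf : CircleIntegrable f c R)
    (hg : CircleIntegrable g c R) (h : ∀ z ∈ sphere c R, f z ≤ g z) :
    poissonIntegral c R f w ≤ poissonIntegral c R g w := by
  refine circleAverage_mono (circleIntegrable_poissonKernel_mul hw hf)
    (circleIntegrable_poissonKernel_mul hw hg) fun z hz ↦ ?_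
  rw [abs_of_pos (pos_of_mem_ball hw)] at hz
  exact mul_le_mul_of_nonneg_left (h z hz) (poissonKernel_nonneg hw hz)

lemma poissonIntegral_nonneg (hw : w ∈ ball c R) (h : ∀ z ∈ sphere c R, 0 ≤ f z) :
    0 ≤ poissonIntegral c R f w := by
  refine circleAverage_nonneg_of_nonneg fun z hz ↦ ?_
  rw [abs_of_pos (pos_of_mem_ball hw)] at hz
  exact mul_nonneg (poissonKernel_nonneg hw hz) (h z hz)

lemma poissonIntegral_sub (hw : w ∈ ball c R) (hf : CircleIntegrable f c R)
    (hg : CircleIntegrable g c R) :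
    poissonIntegral c R (fun z ↦ f z - g z) w =
      poissonIntegral c R f w - poissonIntegral c R g w := by
  simp only [poissonIntegral, mul_sub]
  exact circleAverage_fun_sub (circleIntegrable_poissonKernel_mul hw hf)
    (circleIntegrable_poissonKernel_mul hw hg)

lemma poissonIntegral_eq_of_harmonicContOnCl (hf : HarmonicContOnCl f (ball c R))
    (hw : w ∈ ball c R) : poissonIntegral c R f w = f w :=
  hf.circleAverage_poissonKernel_smul hw

lemma poissonIntegral_const (hw : w ∈ ball c R) (a : ℝ) :
    poissonIntegral c R (fun _ ↦ a) w = a :=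
  poissonIntegral_eq_of_harmonicContOnCl harmonicContOnCl_const hw

lemma poissonIntegral_center (hR : 0 < R) : poissonIntegral c R f c = circleAverage f c R := by
  refine circleAverage_congr_sphere fun z hz ↦ ?_
  rw [abs_of_pos hR] at hz
  have hR2 : R ^ 2 ≠ 0 := (pow_pos hR 2).ne'
  simp [poissonKernel_eq_of_mem_sphere hz, mem_sphere_iff_norm.1 hz, div_self hR2]

lemma abs_poissonIntegral_sub_le (hw : w ∈ ball c R) (hf : CircleIntegrable f c R)
    (hg : CircleIntegrable g c R) {a : ℝ} (h : ∀ z ∈ sphere c R, |f z - g z| ≤ a) :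
    |poissonIntegral c R f w - poissonIntegral c R g w| ≤ a := by
  rw [← poissonIntegral_sub hw hf hg, abs_le]
  constructor
  · rw [← poissonIntegral_const hw (-a)]
    exact poissonIntegral_mono hw (circleIntegrable_const _ _ _) (hf.sub hg)
      fun z hz ↦ (abs_le.1 (h z hz)).1
  · rw [← poissonIntegral_const hw a]
    exact poissonIntegral_mono hw (hf.sub hg) (circleIntegrable_const _ _ _)
      fun z hz ↦ (abs_le.1 (h z hz)).2

theorem poissonIntegral_le_harnack (hw : w ∈ ball c R) (hf : CircleIntegrable f c R)
    (h : ∀ z ∈ sphere c R, 0 ≤ f z) :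
    poissonIntegral c R f w ≤ (R + ‖w - c‖) / (R - ‖w - c‖) * poissonIntegral c R f c := by
  have hR := pos_of_mem_ball hw
  rw [poissonIntegral_center hR, ← smul_eq_mul, ← circleAverage_fun_smul]
  refine circleAverage_mono (circleIntegrable_poissonKernel_mul hw hf) (hf.const_fun_smul)
    fun z hz ↦ ?_
  rw [abs_of_pos hR] at hz
  refine mul_le_mul_of_nonneg_right ?_ (h z hz)
  rw [poissonKernel_eq_re_herglotzRieszKernel]
  exact re_herglotzRieszKernel_le hz hw

theorem harmonicOnNhd_poissonIntegral (hf : CircleIntegrable f c R) :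
    HarmonicOnNhd (poissonIntegral c R f) (ball c R) := by
  set g : ℂ → ℝ := fun z ↦ f (z + c)
  have hg : CircleIntegrable g 0 R := by
    simpa [CircleIntegrable, circleMap, g, add_comm] using hf
  have hg' : CircleIntegrable (fun z ↦ (g z : ℂ)) 0 R := ⟨hg.1.ofReal, hg.2.ofReal⟩
  set F : ℂ → ℂ := fun w ↦
    circleAverage (fun ζ ↦ herglotzRieszKernel 0 (w - c) ζ • (g ζ : ℂ)) 0 R
  have hball : ∀ w ∈ ball c R, w - c ∈ ball 0 R := fun w hw ↦ by
    rwa [mem_ball_zero_iff, ← mem_ball_iff_norm]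
  have hF : AnalyticOnNhd ℂ F (ball c R) :=
    (analyticOnNhd_circleAverage_herglotzRieszKernel_smul hg').comp
      (fun w _ ↦ by fun_prop) hball
  have hFre : Set.EqOn (fun w ↦ (F w).re) (poissonIntegral c R f) (ball c R) := fun w hw ↦ by
    simp only [F, re_circleAverage_herglotzRieszKernel_smul hg (hball w hw)]
    rw [poissonIntegral, ← circleAverage_map_add_const (c := c)]
    simp only [poissonKernel_eq_re_herglotzRieszKernel, Function.comp_apply,
      herglotzRieszKernel_add_const, g, Pi.mul_def, smul_eq_mul]
  intro w hw
  exact (harmonicAt_congr_nhds (hFre.eventuallyEq_of_mem (isOpen_ball.mem_nhds hw))).1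
    (hF w hw).harmonicAt_re

lemma abs_poissonIntegral_sub_le_of_forall_dist_lt (hw : w ∈ ball c R)
    (hf : CircleIntegrable f c R) {a d ε : ℝ} (hd : 0 < d) (hε : 0 ≤ ε)
    (h : ∀ z ∈ sphere c R, dist z w < d → |f z - a| ≤ ε) :
    |poissonIntegral c R f w - a| ≤
      ε + (R ^ 2 - ‖w - c‖ ^ 2) / d ^ 2 * circleAverage (fun z ↦ |f z - a|) c R := by
  have hR := pos_of_mem_ball hw
  have hnum := sq_sub_norm_sub_sq_nonneg hw
  have hfa : CircleIntegrable (fun z ↦ f z - a) c R := hf.sub (circleIntegrable_const _ _ _)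
  have hbound : ∀ z ∈ sphere c R, poissonKernel c w z * |f z - a| ≤
      poissonKernel c w z * ε + (R ^ 2 - ‖w - c‖ ^ 2) / d ^ 2 * |f z - a| := fun z hz ↦ by
    have hK := poissonKernel_nonneg hw hz
    rcases lt_or_ge (dist z w) d with hzw | hzw
    · exact le_add_of_le_of_nonneg (mul_le_mul_of_nonneg_left (h z hz hzw) hK) (by positivity)
    · refine le_add_of_nonneg_of_le (by positivity) (mul_le_mul_of_nonneg_right ?_ (abs_nonneg _))
      rw [poissonKernel_eq_of_mem_sphere hz]
      exact div_le_div_of_nonneg_left hnum (by positivity)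
        (pow_le_pow_left₀ hd.le (dist_eq_norm z w ▸ hzw) 2)
  have hint : CircleIntegrable (fun z ↦ poissonKernel c w z * ε) c R :=
    circleIntegrable_poissonKernel_mul hw (circleIntegrable_const ε c R)
  have hint' : CircleIntegrable
      (fun z ↦ (R ^ 2 - ‖w - c‖ ^ 2) / d ^ 2 * |f z - a|) c R := hfa.abs.const_fun_smul
  calc |poissonIntegral c R f w - a|
      = |poissonIntegral c R (fun z ↦ f z - a) w| := by
        rw [poissonIntegral_sub hw hf (circleIntegrable_const _ _ _), poissonIntegral_const hw]
    _ ≤ circleAverage (fun z ↦ |poissonKernel c w z * (f z - a)|) c R :=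
        abs_circleAverage_le_circleAverage_abs
    _ ≤ circleAverage (fun z ↦ poissonKernel c w z * ε +
          (R ^ 2 - ‖w - c‖ ^ 2) / d ^ 2 * |f z - a|) c R := by
        refine circleAverage_mono (circleIntegrable_poissonKernel_mul hw hfa).abs
          (hint.add hint') fun z hz ↦ ?_
        rw [abs_of_pos hR] at hz
        rw [abs_mul, abs_of_nonneg (poissonKernel_nonneg hw hz)]
        exact hbound z hz
    _ = ε + (R ^ 2 - ‖w - c‖ ^ 2) / d ^ 2 * circleAverage (fun z ↦ |f z - a|) c R := by
        rw [circleAverage_fun_add hint hint', ← smul_eq_mul, ← circleAverage_fun_smul]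
        exact congrArg₂ _ (poissonIntegral_const hw ε) rfl

theorem tendsto_poissonIntegral {ξ : ℂ} (hf : CircleIntegrable f c R) (hξ : ξ ∈ sphere c R)
    (hfξ : ContinuousWithinAt f (sphere c R) ξ) :
    Tendsto (poissonIntegral c R f) (𝓝[ball c R] ξ) (𝓝 (f ξ)) := by
  rw [Metric.tendsto_nhds]
  intro ε hε
  obtain ⟨δ, hδ, hδf⟩ := Metric.continuousWithinAt_iff.1 hfξ (ε / 2) (half_pos hε)
  set A := circleAverage (fun z ↦ |f z - f ξ|) c R
  have hlim : Tendsto (fun w ↦ (R ^ 2 - ‖w - c‖ ^ 2) / (δ / 2) ^ 2 * A) (𝓝[ball c R] ξ)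
      (𝓝 0) := by
    refine (Continuous.tendsto' (by fun_prop) ξ 0 ?_).mono_left nhdsWithin_le_nhds
    simp [mem_sphere_iff_norm.1 hξ]
  filter_upwards [hlim.eventually (gt_mem_nhds (half_pos hε)), self_mem_nhdsWithin,
    mem_nhdsWithin_of_mem_nhds (ball_mem_nhds ξ (half_pos hδ))] with w hwlim hw hwξ
  have hest := abs_poissonIntegral_sub_le_of_forall_dist_lt hw hf (half_pos hδ) (half_pos hε).le
    fun z hz hzw ↦ (hδf hz ?_).le
  · rw [Real.dist_eq]
    linarith
  · linarith [dist_triangle z w ξ, mem_ball.1 hwξ]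

theorem harmonicOnNhd_of_uniform_approx
    (h : ∀ ε > 0, ∃ u, HarmonicContOnCl u (ball c R) ∧ ∀ z ∈ closedBall c R, |f z - u z| ≤ ε) :
    HarmonicOnNhd f (ball c R) := by
  have hf : ContinuousOn f (closedBall c R) := by
    refine continuousOn_of_uniform_approx_of_continuousOn fun s hs ↦ ?_
    obtain ⟨ε, hε, hεs⟩ := Metric.mem_uniformity_dist.1 hs
    obtain ⟨u, hu, hfu⟩ := h (ε / 2) (half_pos hε)
    exact ⟨u, hu.continuousOn_ball, fun z hz ↦ hεs ((hfu z hz).trans_lt (half_lt_self hε))⟩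
  have hint : ∀ {u : ℂ → ℝ}, ContinuousOn u (closedBall c R) → 0 < R → CircleIntegrable u c R :=
    fun hu hR ↦ (hu.mono sphere_subset_closedBall).circleIntegrable hR.le
  have heq : Set.EqOn (poissonIntegral c R f) f (ball c R) := fun w hw ↦ by
    have hR := pos_of_mem_ball hw
    refine eq_of_forall_dist_le fun ε hε ↦ ?_
    obtain ⟨u, hu, hfu⟩ := h (ε / 2) (half_pos hε)
    have hP := abs_poissonIntegral_sub_le hw (hint hf hR) (hint hu.continuousOn_ball hR)
      fun z hz ↦ hfu z (sphere_subset_closedBall hz)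
    rw [poissonIntegral_eq_of_harmonicContOnCl hu hw] at hP
    calc dist (poissonIntegral c R f w) (f w)
        ≤ dist (poissonIntegral c R f w) (u w) + dist (f w) (u w) := dist_triangle_right _ _ _
      _ ≤ ε / 2 + ε / 2 := add_le_add hP (hfu w (ball_subset_closedBall hw))
      _ = ε := add_halves ε
  intro w hw
  have hR := pos_of_mem_ball hw
  exact (harmonicAt_congr_nhds (heq.eventuallyEq_of_mem (isOpen_ball.mem_nhds hw))).1
    (harmonicOnNhd_poissonIntegral (hint hf hR) w hw)

end PoissonIntegral

section PoissonModification

variable {c w : ℂ} {R : ℝ} {U : Set ℂ} {v : ℂ → ℝ}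

/-- The Poisson modification of `v` in the disc `ball c R`: its Poisson integral inside the disc,
and `v` itself outside. -/
noncomputable def poissonModification (c : ℂ) (R : ℝ) (v : ℂ → ℝ) : ℂ → ℝ :=
  (ball c R).piecewise (poissonIntegral c R v) v

lemma SubharmonicOn.circleIntegrable (hv : SubharmonicOn v U) (hR : 0 ≤ R)
    (hball : closedBall c R ⊆ U) : CircleIntegrable v c R :=
  (hv.continuousOn.mono (sphere_subset_closedBall.trans hball)).circleIntegrable hR

lemma tendsto_poissonIntegral_frontier_ball (hR : 0 ≤ R) (hv : ContinuousOn v (sphere c R)) {ξ : ℂ}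
    (hξ : ξ ∈ frontier (ball c R)) :
    Tendsto (poissonIntegral c R v) (𝓝[ball c R] ξ) (𝓝 (v ξ)) :=
  have hξs := frontier_ball_subset_sphere hξ
  tendsto_poissonIntegral (hv.circleIntegrable hR) hξs (hv ξ hξs)

lemma SubharmonicOn.le_poissonIntegral (hv : SubharmonicOn v U) (hball : closedBall c R ⊆ U)
    (hw : w ∈ ball c R) : v w ≤ poissonIntegral c R v w := by
  have hR := (pos_of_mem_ball hw).le
  have hvs : ContinuousOn v (sphere c R) :=
    hv.continuousOn.mono (sphere_subset_closedBall.trans hball)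
  have hP := harmonicOnNhd_poissonIntegral (hv.circleIntegrable hR hball)
  have hdiff := (hv.mono (ball_subset_closedBall.trans hball)).add isOpen_ball
    (.of_harmonicOnNhd isOpen_ball hP.neg)
  refine sub_nonpos.1 <| (sub_eq_add_neg _ _).trans_le <|
    hdiff.le_of_frontier isOpen_ball isBounded_ball (fun ξ hξ a ha ↦ ?_) hw
  have hξU : ξ ∈ U := hball (sphere_subset_closedBall (frontier_ball_subset_sphere hξ))
  have hvξ : Tendsto v (𝓝[ball c R] ξ) (𝓝 (v ξ)) :=
    (hv.continuousOn ξ hξU).mono_left (nhdsWithin_mono ξ (ball_subset_closedBall.trans hball))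
  have hlim := hvξ.add (tendsto_poissonIntegral_frontier_ball hR hvs hξ).neg
  rw [add_neg_cancel] at hlim
  exact hlim.eventually (gt_mem_nhds ha)

theorem SubharmonicOn.poissonModification (hU : IsOpen U) (hv : SubharmonicOn v U) (hR : 0 ≤ R)
    (hball : closedBall c R ⊆ U) : SubharmonicOn (poissonModification c R v) U := by
  have hvs : ContinuousOn v (sphere c R) :=
    hv.continuousOn.mono (sphere_subset_closedBall.trans hball)
  have hP := SubharmonicOn.of_harmonicOnNhd isOpen_ball
    (harmonicOnNhd_poissonIntegral (hv.circleIntegrable hR hball))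
  exact .piecewise hU isOpen_ball (hP.mono Set.inter_subset_right) hv
    (fun z hz ↦ hv.le_poissonIntegral hball hz.2)
    fun z hz ↦ (tendsto_poissonIntegral_frontier_ball hR hvs hz.2).mono_left
      (nhdsWithin_mono z Set.inter_subset_right)

end PoissonModification

section Perron

/-- The Perron family: subharmonic functions on `U` whose upper limits at each boundary point `ξ`
are at most `b ξ`. -/
def perronFamily (U : Set ℂ) (b : ℂ → ℝ) : Set (ℂ → ℝ) :=
  {v | SubharmonicOn v U ∧ ∀ ξ ∈ frontier U, ∀ a > b ξ, ∀ᶠ z in 𝓝[U] ξ, v z < a}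

/-- The upper envelope of the Perron family. The real supremum is meaningful only when the family is
pointwise bounded above, which holds for bounded `U` and `b`. -/
noncomputable def perronSolution (U : Set ℂ) (b : ℂ → ℝ) (z : ℂ) : ℝ :=
  ⨆ v : perronFamily U b, v.1 z

variable {U : Set ℂ} {b u v : ℂ → ℝ} {c w z : ℂ} {M R : ℝ}

lemma mem_perronFamily_of_eventually_le (hv : SubharmonicOn v U)
    (hvb : ∀ ξ ∈ frontier U, ∀ᶠ z in 𝓝[U] ξ, v z ≤ b ξ) : v ∈ perronFamily U b :=
  ⟨hv, fun ξ hξ _ ha ↦ (hvb ξ hξ).mono fun _ hz ↦ hz.trans_lt ha⟩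

lemma le_of_mem_perronFamily_of_eventually_ge (hU : IsOpen U) (hUb : Bornology.IsBounded U)
    (hv : v ∈ perronFamily U b) (hu : SubharmonicOn (fun z ↦ -u z) U)
    (hub : ∀ ξ ∈ frontier U, ∀ᶠ z in 𝓝[U] ξ, b ξ ≤ u z) (hz : z ∈ U) : v z ≤ u z := by
  refine sub_nonpos.1 <| (sub_eq_add_neg _ _).trans_le <|
    (hv.1.add hU hu).le_of_frontier hU hUb (fun ξ hξ a ha ↦ ?_) hz
  filter_upwards [hv.2 ξ hξ (b ξ + a) (lt_add_of_pos_right _ ha), hub ξ hξ] with x hvx hux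
  linarith

lemma sup_mem_perronFamily (hU : IsOpen U) (hu : u ∈ perronFamily U b)
    (hv : v ∈ perronFamily U b) : (fun z ↦ max (u z) (v z)) ∈ perronFamily U b := by
  refine ⟨hu.1.sup hU hv.1, fun ξ hξ a ha ↦ ?_⟩
  filter_upwards [hu.2 ξ hξ a ha, hv.2 ξ hξ a ha] with z huz hvz using max_lt huz hvz

lemma poissonModification_mem_perronFamily (hU : IsOpen U) (hv : v ∈ perronFamily U b)
    (hR : 0 ≤ R) (hball : closedBall c R ⊆ U) :
    poissonModification c R v ∈ perronFamily U b := by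
  refine ⟨hv.1.poissonModification hU hR hball, fun ξ hξ a ha ↦ ?_⟩
  have hξU : ξ ∉ closedBall c R := fun h ↦ (hU.frontier_eq ▸ hξ).2 (hball h)
  filter_upwards [hv.2 ξ hξ a ha,
    mem_nhdsWithin_of_mem_nhds (isClosed_closedBall.isOpen_compl.mem_nhds hξU)] with z hvz hz
  rwa [poissonModification,
    Set.piecewise_eq_of_notMem _ _ _ fun h ↦ hz (ball_subset_closedBall h)]

lemma le_perronSolution (hU : IsOpen U) (hUb : Bornology.IsBounded U)
    (hM : ∀ ξ ∈ frontier U, |b ξ| ≤ M) (hv : v ∈ perronFamily U b) (hz : z ∈ U) :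
    v z ≤ perronSolution U b z := by
  refine le_ciSup (f := fun v : perronFamily U b ↦ v.1 z) ⟨M, ?_⟩ ⟨v, hv⟩
  rintro _ ⟨⟨u, hu⟩, rfl⟩
  exact le_of_mem_perronFamily_of_eventually_ge hU hUb hu (.const (-M))
    (fun ξ hξ ↦ .of_forall fun _ ↦ le_of_abs_le (hM ξ hξ)) hz

lemma perronSolution_le (hM : ∀ ξ ∈ frontier U, |b ξ| ≤ M) {a : ℝ}
    (h : ∀ v ∈ perronFamily U b, v z ≤ a) : perronSolution U b z ≤ a :=
  have : Nonempty (perronFamily U b) := ⟨_, mem_perronFamily_of_eventually_le (.const (-M))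
    fun ξ hξ ↦ .of_forall fun _ ↦ neg_le_of_abs_le (hM ξ hξ)⟩
  ciSup_le fun v ↦ h v.1 v.2

lemma poissonIntegral_le_perronSolution (hU : IsOpen U) (hUb : Bornology.IsBounded U)
    (hM : ∀ ξ ∈ frontier U, |b ξ| ≤ M) (hv : v ∈ perronFamily U b) (hball : closedBall c R ⊆ U)
    (hw : w ∈ ball c R) : poissonIntegral c R v w ≤ perronSolution U b w := by
  have h := le_perronSolution hU hUb hM (poissonModification_mem_perronFamily hU hv
    (pos_of_mem_ball hw).le hball) (hball (ball_subset_closedBall hw))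
  rwa [poissonModification, Set.piecewise_eq_of_mem _ _ _ hw] at h

/-- If `v` nearly attains the envelope at the center `c`, then by Harnack's inequality no other
member of the family can exceed the Poisson integral of `v` by much near `c`. -/
lemma le_poissonIntegral_add_of_mem_perronFamily (hU : IsOpen U) (hUb : Bornology.IsBounded U)
    (hM : ∀ ξ ∈ frontier U, |b ξ| ≤ M) (hR : 0 < R) (hball : closedBall c R ⊆ U)
    (hu : u ∈ perronFamily U b) (hv : v ∈ perronFamily U b) (hw : w ∈ closedBall c (R / 2)) :
    u w ≤ poissonIntegral c R v w + 3 * (perronSolution U b c - v c) := by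
  have hwc : ‖w - c‖ ≤ R / 2 := mem_closedBall_iff_norm.1 hw
  have hwR : w ∈ ball c R := closedBall_subset_ball (half_lt_self hR) hw
  have hcR : c ∈ ball c R := mem_ball_self hR
  set m : ℂ → ℝ := fun z ↦ max (u z) (v z)
  have hm : m ∈ perronFamily U b := sup_mem_perronFamily hU hu hv
  have hvi := hv.1.circleIntegrable hR.le hball
  have hmi := hm.1.circleIntegrable hR.le hball
  have hnonneg : ∀ z ∈ sphere c R, 0 ≤ m z - v z := fun z _ ↦ sub_nonneg.2 (le_max_right _ _)
  have hfactor : (R + ‖w - c‖) / (R - ‖w - c‖) ≤ 3 := by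
    rw [div_le_iff₀ (by linarith)]
    linarith
  have hharnack : poissonIntegral c R m w - poissonIntegral c R v w ≤
      3 * (poissonIntegral c R m c - poissonIntegral c R v c) := calc
    _ = poissonIntegral c R (fun z ↦ m z - v z) w := (poissonIntegral_sub hwR hmi hvi).symm
    _ ≤ 3 * poissonIntegral c R (fun z ↦ m z - v z) c :=
        (poissonIntegral_le_harnack hwR (hmi.sub hvi) hnonneg).trans
          (mul_le_mul_of_nonneg_right hfactor (poissonIntegral_nonneg hcR hnonneg))
    _ = 3 * (poissonIntegral c R m c - poissonIntegral c R v c) := by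
        rw [poissonIntegral_sub hcR hmi hvi]
  have hmc := poissonIntegral_le_perronSolution hU hUb hM hm hball hcR
  have hvc := hv.1.le_poissonIntegral hball hcR
  have huw := (le_max_left (u w) (v w)).trans (hm.1.le_poissonIntegral hball hwR)
  linarith

theorem harmonicOnNhd_perronSolution (hU : IsOpen U) (hUb : Bornology.IsBounded U)
    (hM : ∀ ξ ∈ frontier U, |b ξ| ≤ M) : HarmonicOnNhd (perronSolution U b) U := by
  intro c hc
  obtain ⟨R, hR, hball⟩ := nhds_basis_closedBall.mem_iff.1 (hU.mem_nhds hc)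
  refine harmonicOnNhd_of_uniform_approx (R := R / 2) (fun ε hε ↦ ?_) c
    (mem_ball_self (half_pos hR))
  obtain ⟨v, hv, hvc⟩ : ∃ v ∈ perronFamily U b, perronSolution U b c - ε / 3 < v c := by
    by_contra! h
    linarith [perronSolution_le hM h]
  have hsub : closedBall c (R / 2) ⊆ ball c R := closedBall_subset_ball (half_lt_self hR)
  have hP := harmonicOnNhd_poissonIntegral (hv.1.circleIntegrable hR.le hball)
  refine ⟨poissonIntegral c R v,
    (hP.mono (closure_ball_subset_closedBall.trans hsub)).harmonicContOnCl, fun w hw ↦ ?_⟩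
  have hlow := poissonIntegral_le_perronSolution hU hUb hM hv hball (hsub hw)
  have hup := perronSolution_le hM fun u hu ↦
    le_poissonIntegral_add_of_mem_perronFamily hU hUb hM hR hball hu hv hw
  rw [abs_of_nonneg (sub_nonneg.2 hlow)]
  linarith

end Perron

section Barrier

/-- A *barrier* for `U` at `ζ` of radius `r` and tolerance `ε`: a nonnegative superharmonic function
on `U` which is at least `1` off `ball ζ r` and less than `ε` near `ζ`. Having one for every `r` and
`ε` takes the place of a single barrier tending to `0` at `ζ`. -/
structure IsBarrier (U : Set ℂ) (ζ : ℂ) (r ε : ℝ) (V : ℂ → ℝ) : Prop where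
  subharmonicOn_neg : SubharmonicOn (fun z ↦ -V z) U
  nonneg : ∀ z ∈ U, 0 ≤ V z
  one_le : ∀ z ∈ U, z ∉ ball ζ r → 1 ≤ V z
  eventually_lt : ∀ᶠ z in 𝓝[U] ζ, V z < ε

variable {U : Set ℂ} {b V : ℂ → ℝ} {ζ : ℂ} {M r ε η : ℝ}

lemma IsBarrier.mono_radius (hV : IsBarrier U ζ r ε V) {s : ℝ} (hrs : r ≤ s) :
    IsBarrier U ζ s ε V :=
  ⟨hV.subharmonicOn_neg, hV.nonneg,
    fun z hz hzs ↦ hV.one_le z hz fun h ↦ hzs (ball_subset_ball hrs h), hV.eventually_lt⟩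

lemma IsBarrier.eventually_abs_sub_le (hV : IsBarrier U ζ r ε V) (hζ : ζ ∈ frontier U)
    (hM : ∀ ξ ∈ frontier U, |b ξ| ≤ M) (hη : 0 ≤ η)
    (hb : ∀ ξ ∈ frontier U ∩ closedBall ζ r, |b ξ - b ζ| ≤ η) {ξ : ℂ} (hξ : ξ ∈ frontier U) :
    ∀ᶠ z in 𝓝[U] ξ, |b ξ - b ζ| ≤ η + 2 * M * V z := by
  have hM0 : 0 ≤ M := (abs_nonneg _).trans (hM ζ hζ)
  by_cases hξr : ξ ∈ closedBall ζ r
  · filter_upwards [self_mem_nhdsWithin] with z hz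
    have hVz := hV.nonneg z hz
    exact (hb ξ ⟨hξ, hξr⟩).trans (le_add_of_nonneg_right (by positivity))
  · filter_upwards [self_mem_nhdsWithin,
      mem_nhdsWithin_of_mem_nhds (isClosed_closedBall.isOpen_compl.mem_nhds hξr)] with z hz hzr
    have hVz : 1 ≤ V z := hV.one_le z hz fun h ↦ hzr (ball_subset_closedBall h)
    calc |b ξ - b ζ| ≤ |b ξ| + |b ζ| := abs_sub _ _
      _ ≤ 2 * M * 1 := by linarith [hM ξ hξ, hM ζ hζ]
      _ ≤ 2 * M * V z := by gcongr
      _ ≤ η + 2 * M * V z := le_add_of_nonneg_left hη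

lemma IsBarrier.abs_perronSolution_sub_le (hV : IsBarrier U ζ r ε V) (hU : IsOpen U)
    (hUb : Bornology.IsBounded U) (hζ : ζ ∈ frontier U) (hM : ∀ ξ ∈ frontier U, |b ξ| ≤ M)
    (hη : 0 ≤ η) (hb : ∀ ξ ∈ frontier U ∩ closedBall ζ r, |b ξ - b ζ| ≤ η) {z : ℂ} (hz : z ∈ U) :
    |perronSolution U b z - b ζ| ≤ η + 2 * M * V z := by
  have hM0 : 0 ≤ M := (abs_nonneg _).trans (hM ζ hζ)
  have hnear := fun ξ hξ ↦ hV.eventually_abs_sub_le hζ hM hη hb (ξ := ξ) hξ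
  have hsub (a : ℝ) : SubharmonicOn (fun z ↦ a + 2 * M * -V z) U :=
    .add hU (.const a) (hV.subharmonicOn_neg.const_mul (by positivity))
  have hupper : perronSolution U b z ≤ b ζ + (η + 2 * M * V z) := by
    refine perronSolution_le hM fun v hv ↦ le_of_mem_perronFamily_of_eventually_ge
      (u := fun z ↦ b ζ + (η + 2 * M * V z)) hU hUb hv ?_ (fun ξ hξ ↦ ?_) hz
    · convert hsub (-(b ζ + η)) using 2
      ring
    · filter_upwards [hnear ξ hξ] with x hx
      linarith [le_of_abs_le hx]
  have hlower : b ζ - η + 2 * M * -V z ≤ perronSolution U b z := by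
    refine le_perronSolution hU hUb hM
      (mem_perronFamily_of_eventually_le (hsub (b ζ - η)) fun ξ hξ ↦ ?_) hz
    filter_upwards [hnear ξ hξ] with x hx
    linarith [neg_le_of_abs_le hx]
  exact abs_le.2 ⟨by linarith, by linarith⟩

theorem tendsto_perronSolution (hU : IsOpen U) (hUb : Bornology.IsBounded U)
    (hb : ContinuousWithinAt b (frontier U) ζ) (hM : ∀ ξ ∈ frontier U, |b ξ| ≤ M)
    (hζ : ζ ∈ frontier U)
    (hbar : ∀ r > 0, ∀ ε > 0, ∃ V, IsBarrier U ζ r ε V) :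
    Tendsto (perronSolution U b) (𝓝[U] ζ) (𝓝 (b ζ)) := by
  rw [Metric.tendsto_nhds]
  intro ε hε
  obtain ⟨δ, hδ, hbδ⟩ := Metric.continuousWithinAt_iff.1 hb (ε / 2) (half_pos hε)
  obtain ⟨τ, hτ, hMτ⟩ := exists_pos_mul_lt (half_pos hε) (2 * M)
  obtain ⟨V, hV⟩ := hbar (δ / 2) (half_pos hδ) τ hτ
  have hM0 : 0 ≤ M := (abs_nonneg _).trans (hM ζ hζ)
  filter_upwards [self_mem_nhdsWithin, hV.eventually_lt] with z hz hVz
  calc dist (perronSolution U b z) (b ζ)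
      ≤ ε / 2 + 2 * M * V z :=
        hV.abs_perronSolution_sub_le hU hUb hζ hM (half_pos hε).le
          (fun ξ hξ ↦ (hbδ hξ.1 (closedBall_subset_ball (half_lt_self hδ) hξ.2)).le) hz
    _ ≤ ε / 2 + 2 * M * τ := by gcongr
    _ < ε := by linarith

end Barrier

section Bouligand

/-- A *weak barrier* for `U` at `ζ`: a positive superharmonic function on the part of `U` in
`ball ζ R` which tends to `0` at `ζ`. It need not be bounded below away from `ζ`. -/
structure IsWeakBarrier (U : Set ℂ) (ζ : ℂ) (R : ℝ) (w : ℂ → ℝ) : Prop where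
  subharmonicOn_neg : SubharmonicOn (fun z ↦ -w z) (U ∩ ball ζ R)
  pos : ∀ z ∈ U ∩ ball ζ R, 0 < w z
  tendsto : Tendsto w (𝓝[U] ζ) (𝓝 0)

/-- The amount by which `n * w` falls short of `1` on `U`. As circle data for a Poisson integral, it
is what has to be added to `n * w` to reach the value `1`. -/
noncomputable def deficit (U : Set ℂ) (w : ℂ → ℝ) (n : ℕ) : ℂ → ℝ :=
  U.indicator fun z ↦ max 0 (1 - n * w z)

lemma deficit_nonneg (U : Set ℂ) (w : ℂ → ℝ) (n : ℕ) (z : ℂ) : 0 ≤ deficit U w n z :=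
  Set.indicator_nonneg (fun _ _ ↦ le_max_left _ _) z

lemma one_le_mul_add_deficit {U : Set ℂ} (w : ℂ → ℝ) (n : ℕ) {z : ℂ} (hz : z ∈ U) :
    1 ≤ n * w z + deficit U w n z := by
  rw [deficit, Set.indicator_of_mem hz]
  linarith [le_max_right 0 (1 - n * w z)]

/-- The barrier made from a weak barrier `w` by truncating `n * w` plus the Poisson integral of its
deficit at the value `1`, which it attains on the circle of center `ζ` and radius `ρ`. -/
noncomputable def bouligandBarrier (U : Set ℂ) (ζ : ℂ) (ρ : ℝ) (w : ℂ → ℝ) (n : ℕ) : ℂ → ℝ :=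
  (ball ζ ρ).piecewise (fun z ↦ min 1 (n * w z + poissonIntegral ζ ρ (deficit U w n) z)) 1

namespace IsWeakBarrier

variable {U : Set ℂ} {w : ℂ → ℝ} {ζ : ℂ} {R ρ r ε : ℝ} {n : ℕ}

lemma continuousOn (hw : IsWeakBarrier U ζ R w) : ContinuousOn w (U ∩ ball ζ R) := by
  simpa only [neg_neg] using hw.subharmonicOn_neg.continuousOn.fun_neg

lemma deficit_le_one (hw : IsWeakBarrier U ζ R w) {z : ℂ} (hz : z ∈ ball ζ R) :
    deficit U w n z ≤ 1 := by
  by_cases hzU : z ∈ U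
  · have := hw.pos z ⟨hzU, hz⟩
    rw [deficit, Set.indicator_of_mem hzU]
    exact max_le zero_le_one (sub_le_self 1 (by positivity))
  · rw [deficit, Set.indicator_of_notMem hzU]
    exact zero_le_one

lemma continuousOn_deficit (hw : IsWeakBarrier U ζ R w) :
    ContinuousOn (deficit U w n) (U ∩ ball ζ R) := by
  have hcont : ContinuousOn (fun z ↦ max 0 (1 - n * w z)) (U ∩ ball ζ R) :=
    continuousOn_const.sup (continuousOn_const.sub (continuousOn_const.mul hw.continuousOn))
  exact hcont.congr fun z hz ↦ Set.indicator_of_mem hz.1 _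

lemma measurable_deficit_circleMap (hw : IsWeakBarrier U ζ R w) (hU : IsOpen U) (hρ : 0 ≤ ρ)
    (hρR : ρ < R) : Measurable fun θ ↦ deficit U w n (circleMap ζ ρ θ) := by
  have hmaps (θ : ℝ) : circleMap ζ ρ θ ∈ ball ζ R :=
    closedBall_subset_ball hρR (circleMap_mem_closedBall ζ hρ θ)
  have hopen : IsOpen (circleMap ζ ρ ⁻¹' U) := hU.preimage (continuous_circleMap ζ ρ)
  have hcont : ContinuousOn (fun θ ↦ deficit U w n (circleMap ζ ρ θ)) (circleMap ζ ρ ⁻¹' U) :=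
    hw.continuousOn_deficit.comp (continuous_circleMap ζ ρ).continuousOn
      fun θ hθ ↦ ⟨hθ, hmaps θ⟩
  refine measurable_of_measurable_union_cover (circleMap ζ ρ ⁻¹' U) (circleMap ζ ρ ⁻¹' U)ᶜ
    hopen.measurableSet hopen.measurableSet.compl (Set.union_compl_self _).ge
    hcont.domRestrict.measurable ?_
  have hzero : (fun θ : ↥(circleMap ζ ρ ⁻¹' U)ᶜ ↦ deficit U w n (circleMap ζ ρ θ)) = 0 :=
    funext fun θ ↦ Set.indicator_of_notMem (s := U) θ.2 _
  rw [hzero]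
  exact measurable_zero

lemma abs_deficit_circleMap_le (hw : IsWeakBarrier U ζ R w) (hρ : 0 ≤ ρ) (hρR : ρ < R) (θ : ℝ) :
    |deficit U w n (circleMap ζ ρ θ)| ≤ 1 := by
  rw [abs_of_nonneg (deficit_nonneg _ _ _ _)]
  exact hw.deficit_le_one (closedBall_subset_ball hρR (circleMap_mem_closedBall ζ hρ θ))

lemma circleIntegrable_deficit (hw : IsWeakBarrier U ζ R w) (hU : IsOpen U) (hρ : 0 ≤ ρ)
    (hρR : ρ < R) : CircleIntegrable (deficit U w n) ζ ρ :=
  (intervalIntegrable_const (c := (1 : ℝ))).mono_fun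
    (hw.measurable_deficit_circleMap hU hρ hρR).aestronglyMeasurable
    (.of_forall fun θ ↦ by simpa using hw.abs_deficit_circleMap_le hρ hρR θ)

lemma tendsto_deficit (hw : IsWeakBarrier U ζ R w) {z : ℂ} (hz : z ∈ ball ζ R) :
    Tendsto (fun n ↦ deficit U w n z) atTop (𝓝 0) := by
  by_cases hzU : z ∈ U
  · have hlim : Tendsto (fun n : ℕ ↦ n * w z) atTop atTop :=
      tendsto_natCast_atTop_atTop.atTop_mul_const (hw.pos z ⟨hzU, hz⟩)
    refine tendsto_const_nhds.congr' ?_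
    filter_upwards [hlim.eventually_ge_atTop 1] with n hn
    rw [deficit, Set.indicator_of_mem hzU, max_eq_left (sub_nonpos.2 hn)]
  · simp only [deficit, Set.indicator_of_notMem hzU, tendsto_const_nhds_iff]

lemma tendsto_circleAverage_deficit (hw : IsWeakBarrier U ζ R w) (hU : IsOpen U) (hρ : 0 ≤ ρ)
    (hρR : ρ < R) : Tendsto (fun n ↦ circleAverage (deficit U w n) ζ ρ) atTop (𝓝 0) := by
  have hint : Tendsto (fun n ↦ ∫ θ in 0..2 * π, deficit U w n (circleMap ζ ρ θ)) atTop
      (𝓝 (∫ _ in 0..2 * π, (0 : ℝ))) := by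
    refine intervalIntegral.tendsto_integral_filter_of_dominated_convergence (fun _ ↦ (1 : ℝ))
      (.of_forall fun n ↦ (hw.measurable_deficit_circleMap hU hρ hρR).aestronglyMeasurable)
      (.of_forall fun n ↦ .of_forall fun θ _ ↦ hw.abs_deficit_circleMap_le hρ hρR θ)
      intervalIntegrable_const (.of_forall fun θ _ ↦ ?_)
    exact hw.tendsto_deficit (closedBall_subset_ball hρR (circleMap_mem_closedBall ζ hρ θ))
  rw [intervalIntegral.integral_zero] at hint
  simpa only [circleAverage_def, smul_zero] using hint.const_smul (2 * π)⁻¹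

lemma tendsto_add_poissonIntegral_deficit (hw : IsWeakBarrier U ζ R w) (hU : IsOpen U) (hρ : 0 ≤ ρ)
    (hρR : ρ < R) {ξ : ℂ} (hξ : ξ ∈ U ∩ frontier (ball ζ ρ)) :
    Tendsto (fun z ↦ n * w z + poissonIntegral ζ ρ (deficit U w n) z) (𝓝[U ∩ ball ζ ρ] ξ)
      (𝓝 (n * w ξ + deficit U w n ξ)) := by
  have hξs : ξ ∈ sphere ζ ρ := frontier_ball_subset_sphere hξ.2
  have hξR : ξ ∈ U ∩ ball ζ R :=
    ⟨hξ.1, closedBall_subset_ball hρR (sphere_subset_closedBall hξs)⟩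
  have hopen : U ∩ ball ζ R ∈ 𝓝 ξ := (hU.inter isOpen_ball).mem_nhds hξR
  have hwξ : Tendsto w (𝓝[U ∩ ball ζ ρ] ξ) (𝓝 (w ξ)) :=
    (hw.continuousOn.continuousAt hopen).continuousWithinAt
  have hP := tendsto_poissonIntegral (hw.circleIntegrable_deficit (n := n) hU hρ hρR) hξs
    (hw.continuousOn_deficit.continuousAt hopen).continuousWithinAt
  exact (hwξ.const_mul _).add (hP.mono_left (nhdsWithin_mono ξ Set.inter_subset_right))

lemma subharmonicOn_neg_bouligandBarrier (hw : IsWeakBarrier U ζ R w) (hU : IsOpen U) (hρ : 0 ≤ ρ)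
    (hρR : ρ < R) : SubharmonicOn (fun z ↦ -bouligandBarrier U ζ ρ w n z) U := by
  set f : ℂ → ℝ := fun z ↦ n * w z + poissonIntegral ζ ρ (deficit U w n) z with hf
  have hP := harmonicOnNhd_poissonIntegral (hw.circleIntegrable_deficit (n := n) hU hρ hρR)
  have hUρ : IsOpen (U ∩ ball ζ ρ) := hU.inter isOpen_ball
  have hws : SubharmonicOn (fun z ↦ -w z) (U ∩ ball ζ ρ) :=
    hw.subharmonicOn_neg.mono (Set.inter_subset_inter_right U (ball_subset_ball hρR.le))
  have hfs : SubharmonicOn (fun z ↦ -f z) (U ∩ ball ζ ρ) := by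
    convert! (hws.const_mul n.cast_nonneg).add hUρ
      (.of_harmonicOnNhd hUρ (hP.neg.mono Set.inter_subset_right)) using 2 with z
    simp only [hf, Pi.neg_apply]
    ring
  have hglue : (fun z ↦ -bouligandBarrier U ζ ρ w n z) =
      (ball ζ ρ).piecewise (fun z ↦ max (-1) (-f z)) (fun _ ↦ -1) := by
    funext z
    by_cases hz : z ∈ ball ζ ρ
    · simp only [bouligandBarrier, Set.piecewise_eq_of_mem _ _ _ hz, max_neg_neg, hf]
    · simp only [bouligandBarrier, Set.piecewise_eq_of_notMem _ _ _ hz, Pi.one_apply]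
  rw [hglue]
  refine .piecewise hU isOpen_ball (.sup hUρ (.const (-1)) hfs) (.const (-1))
    (fun _ _ ↦ le_max_left _ _) fun ξ hξ ↦ ?_
  have hlim := (tendsto_const_nhds (x := (-1 : ℝ))).max
    (hw.tendsto_add_poissonIntegral_deficit (n := n) hU hρ hρR hξ).neg
  rwa [max_eq_left (neg_le_neg (one_le_mul_add_deficit w n hξ.1))] at hlim

lemma eventually_bouligandBarrier_lt (hw : IsWeakBarrier U ζ R w) (hU : IsOpen U) (hρ : 0 < ρ)
    (hρR : ρ < R) (hn : circleAverage (deficit U w n) ζ ρ < ε) :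
    ∀ᶠ z in 𝓝[U] ζ, bouligandBarrier U ζ ρ w n z < ε := by
  have hP := (harmonicOnNhd_poissonIntegral (hw.circleIntegrable_deficit (n := n) hU hρ.le hρR)
    ζ (mem_ball_self hρ)).1.continuousAt
  have hlim := (hw.tendsto.const_mul (n : ℝ)).add (hP.mono_left nhdsWithin_le_nhds)
  rw [mul_zero, zero_add, poissonIntegral_center hρ] at hlim
  filter_upwards [hlim.eventually (gt_mem_nhds hn),
    mem_nhdsWithin_of_mem_nhds (ball_mem_nhds ζ hρ)] with z hz hzρ
  rw [bouligandBarrier, Set.piecewise_eq_of_mem _ _ _ hzρ]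
  exact (min_le_right _ _).trans_lt hz

lemma isBarrier_bouligandBarrier (hw : IsWeakBarrier U ζ R w) (hU : IsOpen U) (hρ : 0 < ρ)
    (hρR : ρ < R) (hn : circleAverage (deficit U w n) ζ ρ < ε) :
    IsBarrier U ζ ρ ε (bouligandBarrier U ζ ρ w n) where
  subharmonicOn_neg := hw.subharmonicOn_neg_bouligandBarrier hU hρ.le hρR
  nonneg z hz := by
    by_cases hzρ : z ∈ ball ζ ρ
    · have hwz := hw.pos z ⟨hz, ball_subset_ball hρR.le hzρ⟩
      have hPz := poissonIntegral_nonneg hzρ fun ξ _ ↦ deficit_nonneg U w n ξ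
      rw [bouligandBarrier, Set.piecewise_eq_of_mem _ _ _ hzρ]
      positivity
    · rw [bouligandBarrier, Set.piecewise_eq_of_notMem _ _ _ hzρ]
      exact zero_le_one
  one_le z _ hz := by
    rw [bouligandBarrier, Set.piecewise_eq_of_notMem _ _ _ hz, Pi.one_apply]
  eventually_lt := hw.eventually_bouligandBarrier_lt hU hρ hρR hn

theorem exists_isBarrier (hw : IsWeakBarrier U ζ R w) (hU : IsOpen U) (hR : 0 < R) (hr : 0 < r)
    (hε : 0 < ε) : ∃ V, IsBarrier U ζ r ε V := by
  set ρ := min r (R / 2)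
  have hρ : 0 < ρ := lt_min hr (half_pos hR)
  have hρR : ρ < R := (min_le_right _ _).trans_lt (half_lt_self hR)
  obtain ⟨n, hn⟩ := ((hw.tendsto_circleAverage_deficit hU hρ.le hρR).eventually
    (gt_mem_nhds hε)).exists
  exact ⟨_, (hw.isBarrier_bouligandBarrier hU hρ hρR hn).mono_radius (min_le_left _ _)⟩

end IsWeakBarrier

end Bouligand

section Dirichlet

lemma continuousOn_piecewise_closure {X Y : Type*} [TopologicalSpace X] [TopologicalSpace Y]
    {U : Set X} {h b : X → Y} (hU : IsOpen U) (hh : ContinuousOn h U)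
    (hb : ContinuousOn b (frontier U)) (hlim : ∀ ξ ∈ frontier U, Tendsto h (𝓝[U] ξ) (𝓝 (b ξ))) :
    ContinuousOn (U.piecewise h b) (closure U) := by
  have hUcl : closure U ∩ U = U := Set.inter_eq_right.2 subset_closure
  have hfr : closure U ∩ Uᶜ = frontier U := hU.frontier_eq.symm
  refine ContinuousOn.piecewise' (fun ξ hξ ↦ ?_) (fun ξ hξ ↦ ?_) (hUcl.symm ▸ hh) (hfr.symm ▸ hb)
  all_goals rw [Set.piecewise_eq_of_notMem _ _ _ (hU.frontier_eq ▸ hξ.2).2]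
  · exact hUcl.symm ▸ hlim ξ hξ.2
  · exact hfr.symm ▸ hb ξ hξ.2

theorem exists_harmonicOnNhd_continuousOn_closure {U : Set ℂ} (hU : IsOpen U)
    (hUb : Bornology.IsBounded U)
    (hbar : ∀ ζ ∈ frontier U, ∃ R > 0, ∃ w, IsWeakBarrier U ζ R w) {b : ℂ → ℝ}
    (hb : ContinuousOn b (frontier U)) :
    ∃ h : ℂ → ℝ, HarmonicOnNhd h U ∧ ContinuousOn (U.piecewise h b) (closure U) := by
  obtain ⟨M, hM⟩ := (hUb.isCompact_closure.of_isClosed_subset isClosed_frontier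
    frontier_subset_closure).exists_bound_of_continuousOn hb
  have hharm := harmonicOnNhd_perronSolution hU hUb hM
  refine ⟨perronSolution U b, hharm,
    continuousOn_piecewise_closure hU hharm.continuousOn hb fun ζ hζ ↦ ?_⟩
  obtain ⟨R, hR, w, hw⟩ := hbar ζ hζ
  exact tendsto_perronSolution hU hUb (hb ζ hζ) hM hζ fun r hr ε hε ↦
    hw.exists_isBarrier hU hR hr hε

end Dirichlet

section HolSC

lemma eventuallyEq_const_of_deriv_eq_zero {𝕜 G : Type*} [RCLike 𝕜] [NormedAddCommGroup G]
    [NormedSpace 𝕜 G] {U : Set 𝕜} (hU : IsOpen U) {f : 𝕜 → G} (hf : DifferentiableOn 𝕜 f U)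
    (hf' : U.EqOn (deriv f) 0) {z : 𝕜} (hz : z ∈ U) : f =ᶠ[𝓝 z] fun _ ↦ f z := by
  obtain ⟨r, hr, hrU⟩ := Metric.isOpen_iff.1 hU z hz
  filter_upwards [ball_mem_nhds z hr] with w hw
  exact isOpen_ball.is_const_of_deriv_eq_zero isPreconnected_ball (hf.mono hrU)
    (hf'.mono hrU) hw (mem_ball_self hr)

theorem HolSC.exists_exp_eq {U : Set ℂ} (hU : IsOpen U) (hsc : HolSC U) {f : ℂ → ℂ}
    (hf : DifferentiableOn ℂ f U) (hf0 : ∀ z ∈ U, f z ≠ 0) :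
    ∃ L : ℂ → ℂ, DifferentiableOn ℂ L U ∧ ∀ z ∈ U, Complex.exp (L z) = f z := by
  obtain ⟨G, hG, hG'⟩ := hsc (fun z ↦ deriv f z / f z) ((hf.deriv hU).div hf hf0)
  set k : ℂ → ℂ := fun z ↦ f z * Complex.exp (-G z) with hk
  have hk' : ∀ z ∈ U, HasDerivAt k 0 z := fun z hz ↦ by
    convert! (hf.differentiableAt (hU.mem_nhds hz)).hasDerivAt.mul (hG' z hz).neg.cexp using 1
    field_simp [hf0 z hz]
    ring
  have hk0 : ∀ z ∈ U, k z ≠ 0 := fun z hz ↦ mul_ne_zero (hf0 z hz) (Complex.exp_ne_zero _)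
  have hkconst : ∀ z ∈ U, k =ᶠ[𝓝 z] fun _ ↦ k z := fun z hz ↦
    eventuallyEq_const_of_deriv_eq_zero hU
      (fun w hw ↦ (hk' w hw).differentiableAt.differentiableWithinAt)
      (fun w hw ↦ (hk' w hw).deriv) hz
  refine ⟨fun z ↦ G z + Complex.log (k z), fun z hz ↦ ?_, fun z hz ↦ ?_⟩
  · -- `k` is locally constant, so the branch cut of the logarithm does no harm
    have hlog : DifferentiableAt ℂ (fun w ↦ Complex.log (k w)) z :=
      (differentiableAt_const (Complex.log (k z))).congr_of_eventuallyEq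
        ((hkconst z hz).fun_comp Complex.log)
    exact (hG z hz).add hlog.differentiableWithinAt
  · rw [Complex.exp_add, Complex.exp_log (hk0 z hz), hk, mul_left_comm, ← Complex.exp_add,
      add_neg_cancel, Complex.exp_zero, mul_one]

section BranchOfLog

variable {U : Set ℂ} {ζ z : ℂ} {L : ℂ → ℂ}

lemma re_eq_log_norm_of_exp_eq {x y : ℂ} (h : Complex.exp x = y) : x.re = Real.log ‖y‖ := by
  rw [← h, Complex.norm_exp, Real.log_exp]

lemma notMem_of_exp_eq_sub (hexp : ∀ z ∈ U, Complex.exp (L z) = z - ζ) : ζ ∉ U :=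
  fun h ↦ Complex.exp_ne_zero (L ζ) ((hexp ζ h).trans (sub_self ζ))

lemma tendsto_inv_of_exp_eq_sub (hexp : ∀ z ∈ U, Complex.exp (L z) = z - ζ) :
    Tendsto (fun z ↦ (L z)⁻¹) (𝓝[U] ζ) (𝓝 0) := by
  have hU : U ⊆ {ζ}ᶜ := Set.subset_compl_singleton_iff.2 (notMem_of_exp_eq_sub hexp)
  have hlog : Tendsto (fun z ↦ Real.log ‖z - ζ‖) (𝓝[U] ζ) atBot :=
    (Real.tendsto_log_nhdsGT_zero.comp (tendsto_norm_sub_self_nhdsNE ζ)).mono_left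
      (nhdsWithin_mono ζ hU)
  have hnorm : Tendsto (fun z ↦ ‖L z‖) (𝓝[U] ζ) atTop := by
    refine tendsto_atTop_mono' _ ?_ (tendsto_abs_atBot_atTop.comp hlog)
    filter_upwards [self_mem_nhdsWithin] with z hz
    rw [Function.comp_apply, ← re_eq_log_norm_of_exp_eq (hexp z hz)]
    exact Complex.abs_re_le_norm (L z)
  exact tendsto_inv₀_cobounded.comp (tendsto_norm_atTop_iff_cobounded.1 hnorm)

theorem isWeakBarrier_neg_re_inv (hU : IsOpen U) (hL : DifferentiableOn ℂ L U)
    (hexp : ∀ z ∈ U, Complex.exp (L z) = z - ζ) :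
    IsWeakBarrier U ζ 1 fun z ↦ -((L z)⁻¹).re := by
  have hneg : ∀ z ∈ U ∩ ball ζ 1, (L z).re < 0 := fun z ⟨hz, hzζ⟩ ↦ by
    have hne : z - ζ ≠ 0 := hexp z hz ▸ Complex.exp_ne_zero (L z)
    rw [re_eq_log_norm_of_exp_eq (hexp z hz)]
    exact Real.log_neg (norm_pos_iff.2 hne) (mem_ball_iff_norm.1 hzζ)
  have hL0 : ∀ z ∈ U ∩ ball ζ 1, L z ≠ 0 := fun z hz h ↦
    (hneg z hz).ne (by rw [h, Complex.zero_re])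
  refine ⟨?_, fun z hz ↦ ?_, ?_⟩
  · have hopen : IsOpen (U ∩ ball ζ 1) := hU.inter isOpen_ball
    have hinv : AnalyticOnNhd ℂ (fun z ↦ (L z)⁻¹) (U ∩ ball ζ 1) :=
      ((hL.mono Set.inter_subset_left).inv hL0).analyticOnNhd hopen
    simpa only [neg_neg] using
      SubharmonicOn.of_harmonicOnNhd hopen fun z hz ↦ (hinv z hz).harmonicAt_re
  · rw [Complex.inv_re, ← neg_div]
    exact div_pos (neg_pos.2 (hneg z hz)) (Complex.normSq_pos.2 (hL0 z hz))
  · exact ((Complex.continuous_re.neg).tendsto' 0 0 (by simp)).comp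
      (tendsto_inv_of_exp_eq_sub hexp)

end BranchOfLog

theorem HolSC.exists_isWeakBarrier {U : Set ℂ} (hU : IsOpen U) (hsc : HolSC U) {ζ : ℂ}
    (hζ : ζ ∉ U) : ∃ w, IsWeakBarrier U ζ 1 w := by
  obtain ⟨L, hL, hexp⟩ := hsc.exists_exp_eq hU (f := fun z ↦ z - ζ) (by fun_prop)
    fun z hz ↦ sub_ne_zero.2 fun h ↦ hζ (h ▸ hz)
  exact ⟨_, isWeakBarrier_neg_re_inv hU hL hexp⟩

theorem HarmonicOnSet.of_harmonicOnNhd {h : ℂ → ℝ} {U : Set ℂ} (hU : IsOpen U)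
    (hh : HarmonicOnNhd h U) : HarmonicOnSet h U := by
  intro z hz
  obtain ⟨r, hr, hrU⟩ := Metric.isOpen_iff.1 hU z hz
  obtain ⟨F, hF, hFh⟩ := (hh.mono hrU).exists_analyticOnNhd_ball_re_eq
  exact ⟨ball z r, isOpen_ball, mem_ball_self hr, hrU, F, hF.differentiableOn, hFh⟩

theorem holSC_dirichlet_solvable_general {U : Set ℂ} (hUopen : IsOpen U)
    (hUbdd : Bornology.IsBounded U) (hU : HolSC U) {b : ℂ → ℝ}
    (hb : ContinuousOn b (frontier U)) :
    ∃ h : ℂ → ℝ, HarmonicOnSet h U ∧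
      ContinuousOn (fun z => if z ∈ U then h z else b z) (closure U) := by
  obtain ⟨h, hh, hcont⟩ := exists_harmonicOnNhd_continuousOn_closure hUopen hUbdd
    (fun ζ hζ ↦ ⟨1, one_pos, hU.exists_isWeakBarrier hUopen (hUopen.frontier_eq ▸ hζ).2⟩) hb
  exact ⟨h, .of_harmonicOnNhd hUopen hh, hcont⟩

end HolSC

/-- On a bounded holomorphically simply connected domain, the Dirichlet problem
is solvable for every continuous boundary function `b`. -/
theorem holSC_dirichlet_solvable (U : Set ℂ) (hUopen : IsOpen U)
    (hUconn : IsConnected U) (hUbdd : Bornology.IsBounded U) (hU : HolSC U)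
    (b : ℂ → ℝ) (hb : ContinuousOn b (frontier U)) :
    ∃ h : ℂ → ℝ, HarmonicOnSet h U ∧
      ContinuousOn (fun z => if z ∈ U then h z else b z) (closure U) :=
  holSC_dirichlet_solvable_general hUopen hUbdd hU hb
end

section
/- Let U be a connected open subset of ℂ that is holomorphically simply connected, and let g : U → ℝ be harmonic. Then g has a harmonic conjugate on U: there exists a holomorphic function G on U with Re G(z) = g(z) for all z ∈ U (equivalently, a function ĝ : U → ℝ such that g + i·ĝ is holomorphic on U). -/
open Complex InnerProductSpace Topology

theorem HarmonicOnSet.harmonicOnNhd {g : ℂ → ℝ} {U : Set ℂ} (hg : HarmonicOnSet g U) :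
    HarmonicOnNhd g U := by
  intro z hz
  obtain ⟨V, hV, hzV, -, F, hF, hre⟩ := hg z hz
  have hVz : V ∈ 𝓝 z := hV.mem_nhds hzV
  have hre_eq : (fun w ↦ (F w).re) =ᶠ[𝓝 z] g := Filter.eventually_of_mem hVz hre
  exact (harmonicAt_congr_nhds hre_eq).1 (hF.analyticAt hVz).harmonicAt_re

/-- The complex gradient `∂g/∂1 - I * ∂g/∂I` of a real-valued function, that is, twice its
Wirtinger derivative `∂g/∂z`. It is the derivative of every holomorphic function with real
part `g`. -/
noncomputable def complexGradient (g : ℂ → ℝ) (z : ℂ) : ℂ :=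
  fderiv ℝ g z 1 - I * fderiv ℝ g z I

theorem re_mul_complexGradient (g : ℂ → ℝ) (z v : ℂ) :
    (v * complexGradient g z).re = fderiv ℝ g z v := by
  calc (v * complexGradient g z).re
      = v.re • fderiv ℝ g z 1 + v.im • fderiv ℝ g z I := by simp [complexGradient]
    _ = fderiv ℝ g z (v.re • (1 : ℂ) + v.im • I) := by simp only [map_add, map_smul]
    _ = fderiv ℝ g z v := by simp [re_add_im]

theorem hasDerivAt_ofReal_add_im_mul_I {g : ℂ → ℝ} {F : ℂ → ℂ} {z : ℂ}
    (hg : DifferentiableAt ℝ g z) (hF : HasDerivAt F (complexGradient g z) z) :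
    HasDerivAt (fun w ↦ g w + (F w).im * I) (complexGradient g z) z := by
  have hg_ofReal : HasFDerivAt (fun w ↦ (g w : ℂ)) (ofRealCLM ∘L fderiv ℝ g z) z :=
    ofRealCLM.hasFDerivAt.comp z hg.hasFDerivAt
  have hF_im : HasFDerivAt (fun w ↦ ((F w).im : ℂ)) _ z :=
    (ofRealCLM ∘L imCLM).hasFDerivAt.comp z (hF.hasFDerivAt.restrictScalars ℝ)
  refine hasFDerivAt_of_restrictScalars ℝ (hg_ofReal.fun_add (hF_im.mul_const I)) ?_
  ext v
  calc v * complexGradient g z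
      = (v * complexGradient g z).re + (v * complexGradient g z).im * I := (re_add_im _).symm
    _ = fderiv ℝ g z v + I * (v * complexGradient g z).im := by
      rw [re_mul_complexGradient, mul_comm I]

theorem holSC_harmonic_conjugate_general {U : Set ℂ} (hU : HolSC U) {g : ℂ → ℝ}
    (hg : HarmonicOnNhd g U) :
    ∃ G : ℂ → ℂ, DifferentiableOn ℂ G U ∧ ∀ z ∈ U, (G z).re = g z := by
  have hgrad : DifferentiableOn ℂ (complexGradient g) U := fun z hz ↦
    (HarmonicAt.differentiableAt_complex_partial (hg z hz)).differentiableWithinAt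
  obtain ⟨F, -, hF⟩ := hU (complexGradient g) hgrad
  refine ⟨fun z ↦ g z + (F z).im * I, fun z hz ↦ ?_, fun z _ ↦ by simp⟩
  have hgz : DifferentiableAt ℝ g z := (hg z hz).1.differentiableAt two_ne_zero
  exact (hasDerivAt_ofReal_add_im_mul_I hgz (hF z hz)).differentiableAt.differentiableWithinAt

/-- On a holomorphically simply connected domain, every harmonic function has a
harmonic conjugate: it is (globally) the real part of a holomorphic function. -/
theorem holSC_harmonic_conjugate (U : Set ℂ) (hUopen : IsOpen U)
    (hUconn : IsConnected U) (hU : HolSC U) (g : ℂ → ℝ)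
    (hg : HarmonicOnSet g U) :
    ∃ G : ℂ → ℂ, DifferentiableOn ℂ G U ∧ ∀ z ∈ U, (G z).re = g z :=
  holSC_harmonic_conjugate_general hU hg.harmonicOnNhd
end
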